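/- arXiv:1612.03295 — 2 statements merged into one kernel-verified Lean document; each statement's English description precedes it below -/
import Mathlib

section
/- Let w be the unique radial positive solution of Δw − w + w³ = 0 in ℝ², let h ∈ C²(ℝ²) be homogeneous of degree p ≥ 2 with H(y) = ∫h(x+y)w² having a unique critical point y₀, let λ = ((p/2)∫h(x+y₀)w²)^{1/(2+p)}, a* = ‖w‖₂², let ψ₁ solve ∇ψ₁(0)=0, (−Δ+1−3w²)ψ₁ = −w³/a* − h(x+y₀)w/λ^{2+p}, let ψ₂ = −(1/2)(w + x·∇w), and let ψ₅ be the unique solution of ∇ψ₅(0)=0 and (−Δ+1−3w²)ψ₅ = 6wψ₁ψ₂ + ψ₁ − (3w²/a* + h(x+y₀)/λ^{2+p})ψ₂ − (w/(2λ^{2+p}))(y₀·∇h(x+y₀)). Then 2∫_{ℝ²} wψ₅ + 2∫_{ℝ²} ψ₁ψ₂ = −(2+p)/2. -/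
noncomputable section
open MeasureTheory Filter Real Set
open scoped RealInnerProductSpace Topology

abbrev R2 : Type := EuclideanSpace ℝ (Fin 2)

/-- The Laplacian of `f : ℝ² → ℝ`. -/
def lap (f : R2 → ℝ) (x : R2) : ℝ :=
  ∑ i : Fin 2, fderiv ℝ (fun y => fderiv ℝ f y (EuclideanSpace.single i 1)) x
    (EuclideanSpace.single i 1)

/-- The linearized operator `L = -Δ + (1 - 3 w²)` applied to `f`. -/
def Lop (w f : R2 → ℝ) (x : R2) : ℝ := -lap f x + (1 - 3 * (w x) ^ 2) * f x

/-- `x · ∇f`. -/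
def xgrad (f : R2 → ℝ) (x : R2) : ℝ := ⟪x, gradient f x⟫

/-- First partial derivative `∂f/∂x₁`. -/
def pd1 (f : R2 → ℝ) (x : R2) : ℝ := fderiv ℝ f x (EuclideanSpace.single 0 1)

/-- `w` is the (radial positive) ground state of `Δw - w + w³ = 0` in `ℝ²`, `w ∈ H¹`. -/
structure IsGroundState (w : R2 → ℝ) : Prop where
  smooth : ContDiff ℝ 2 w
  pos : ∀ x, 0 < w x
  radial : ∀ x y : R2, ‖x‖ = ‖y‖ → w x = w y
  eqn : ∀ x, lap w x - w x + (w x) ^ 3 = 0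
  sqInt : Integrable fun x => (w x) ^ 2
  quarticInt : Integrable fun x => (w x) ^ 4
  gradSqInt : Integrable fun x => ‖gradient w x‖ ^ 2

/-- `h` is homogeneous of degree `p`. -/
def Homog (h : R2 → ℝ) (p : ℝ) : Prop :=
  ∀ t : ℝ, 0 < t → ∀ x : R2, h (t • x) = t ^ p * h x

/-- `H(y) = ∫ h(x+y) w(x)² dx`. -/
def Hfun (h w : R2 → ℝ) (y : R2) : ℝ := ∫ x, h (x + y) * (w x) ^ 2

/-- Determinant of the Hessian of `H` at `y`. -/
def hessDet (H : R2 → ℝ) (y : R2) : ℝ :=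
  (fderiv ℝ (fun z => fderiv ℝ H z (EuclideanSpace.single 0 1)) y (EuclideanSpace.single 0 1)) *
    (fderiv ℝ (fun z => fderiv ℝ H z (EuclideanSpace.single 1 1)) y (EuclideanSpace.single 1 1)) -
  (fderiv ℝ (fun z => fderiv ℝ H z (EuclideanSpace.single 0 1)) y (EuclideanSpace.single 1 1)) *
    (fderiv ℝ (fun z => fderiv ℝ H z (EuclideanSpace.single 1 1)) y (EuclideanSpace.single 0 1))

/-- The Gross–Pitaevskii energy functional. -/
def GPe (V : R2 → ℝ) (a : ℝ) (u : R2 → ℝ) : ℝ :=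
  (∫ x, ‖gradient u x‖ ^ 2) + (∫ x, V x * (u x) ^ 2) - a / 2 * ∫ x, (u x) ^ 4

/-- Admissible class: `u ∈ H¹`, `∫ V u² < ∞`, `‖u‖₂ = 1`. -/
def Admissible (V : R2 → ℝ) (u : R2 → ℝ) : Prop :=
  Integrable (fun x => (u x) ^ 2) ∧ Integrable (fun x => ‖gradient u x‖ ^ 2) ∧
    Integrable (fun x => V x * (u x) ^ 2) ∧ (∫ x, (u x) ^ 2) = 1

/-- `e(a)`, the ground state energy. -/
def gpInf (V : R2 → ℝ) (a : ℝ) : ℝ := sInf (GPe V a '' {u | Admissible V u})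

/-- `u` is a positive minimizer of `e(a)`. -/
def IsPosMinimizer (V : R2 → ℝ) (a : ℝ) (u : R2 → ℝ) : Prop :=
  Admissible V u ∧ GPe V a u = gpInf V a ∧ ∀ x, 0 < u x

/-- `x0` is the unique maximum point of `u`. -/
def IsUniqueMaxPt (u : R2 → ℝ) (x0 : R2) : Prop :=
  IsMaxOn u univ x0 ∧ ∀ z, IsMaxOn u univ z → z = x0

/-- The Lagrange multiplier `μ_a = e(a) - (a/2)∫u⁴`. -/
def lagrangeMul (V : R2 → ℝ) (a : ℝ) (u : R2 → ℝ) : ℝ :=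
  gpInf V a - a / 2 * ∫ x, (u x) ^ 4

/-- A bounded function on `ℝ²`. -/
def BddFun (f : R2 → ℝ) : Prop := ∃ M, ∀ x, |f x| ≤ M

/-!
The dilations `wₜ = t w(t ·)` solve `-Δwₜ + t² wₜ - wₜ³ = 0`. Differentiating once and twice at
`t = 1`, with `v = w + x · ∇w = -2 ψ₂` and `v' = x · ∇v`, gives `L v = -2 w` and
`L (v' - v) = 6 w v² - 4 v`. Pairing the first equation with `ψ₅` and the second with `ψ₁` turns
`2 ∫ w ψ₅ + 2 ∫ ψ₁ ψ₂` into integrals of `w`, `v`, `v'` and `h(· + y₀)` only. By the scaling of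
`∫ wₜ⁴` the cubic terms cancel; by the homogeneity of `h` and `∇H(y₀) = 0` the remaining terms are
a multiple of `H(y₀)`, and `λ` is chosen to normalise that multiple.

As `w` is only `C²`, the equations for `v` and `v'` are understood weakly and obtained by
dilating the test function. The integrals converge because `w`, `∇w` and hence `v`, `v'` decay
exponentially, which follows from the radial equation `w'' + w'/r = w - w³ ≥ w/4` for large `r`.
-/

section Growth

variable {E F : Type*} [NormedAddCommGroup E] [NormedAddCommGroup F]

/-- A continuous function of at most polynomial growth. -/
@[fun_prop]
structure PolyBounded (f : E → F) : Prop where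
  continuous : Continuous f
  exists_norm_le : ∃ (C : ℝ) (n : ℕ), ∀ x, ‖f x‖ ≤ C * (1 + ‖x‖) ^ n

/-- A continuous function decaying faster than every power of `‖x‖`; unlike for a Schwartz
function, nothing is asked of derivatives. -/
@[fun_prop]
structure RapidDecay (f : E → ℝ) : Prop where
  continuous : Continuous f
  exists_mul_le : ∀ k : ℕ, ∃ C : ℝ, ∀ x, (1 + ‖x‖) ^ k * |f x| ≤ C

@[fun_prop]
theorem polyBounded_const (c : F) : PolyBounded fun _ : E => c :=
  ⟨continuous_const, ‖c‖, 0, fun _ => by simp⟩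

@[fun_prop]
theorem polyBounded_norm : PolyBounded fun x : E => ‖x‖ :=
  ⟨continuous_norm, 1, 1, fun x => by simp⟩

theorem integrable_inv_one_add_norm_pow [NormedSpace ℝ E] [FiniteDimensional ℝ E]
    [MeasurableSpace E] [BorelSpace E] (μ : Measure E) [μ.IsAddHaarMeasure] :
    Integrable (fun x => ((1 + ‖x‖) ^ (Module.finrank ℝ E + 1))⁻¹) μ := by
  have hdim : (Module.finrank ℝ E : ℝ) < (Module.finrank ℝ E + 1 : ℕ) := by push_cast; linarith
  refine (integrable_one_add_norm (μ := μ) hdim).congr (.of_forall fun x => ?_)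
  simp only [rpow_neg (add_nonneg zero_le_one (norm_nonneg x)), rpow_natCast]

namespace PolyBounded

variable {f g : E → ℝ}

theorem exists_nonneg_norm_le {f : E → F} (hf : PolyBounded f) :
    ∃ (C : ℝ) (n : ℕ), 0 ≤ C ∧ ∀ x, ‖f x‖ ≤ C * (1 + ‖x‖) ^ n := by
  obtain ⟨C, n, hC⟩ := hf.exists_norm_le
  exact ⟨C, n, by simpa using (norm_nonneg _).trans (hC 0), hC⟩

@[fun_prop]
theorem add (hf : PolyBounded f) (hg : PolyBounded g) : PolyBounded fun x => f x + g x := by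
  obtain ⟨C, n, hC0, hC⟩ := hf.exists_nonneg_norm_le
  obtain ⟨D, m, hD0, hD⟩ := hg.exists_nonneg_norm_le
  refine ⟨hf.continuous.add hg.continuous, C + D, n + m, fun x => ?_⟩
  have hx : 1 ≤ 1 + ‖x‖ := by linarith [norm_nonneg x]
  calc ‖f x + g x‖ ≤ C * (1 + ‖x‖) ^ n + D * (1 + ‖x‖) ^ m :=
        (norm_add_le _ _).trans (add_le_add (hC x) (hD x))
    _ ≤ C * (1 + ‖x‖) ^ (n + m) + D * (1 + ‖x‖) ^ (n + m) := by
        gcongr <;> first | exact hx | omega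
    _ = (C + D) * (1 + ‖x‖) ^ (n + m) := by ring

@[fun_prop]
theorem mul (hf : PolyBounded f) (hg : PolyBounded g) : PolyBounded fun x => f x * g x := by
  obtain ⟨C, n, hC0, hC⟩ := hf.exists_nonneg_norm_le
  obtain ⟨D, m, hD⟩ := hg.exists_norm_le
  refine ⟨hf.continuous.mul hg.continuous, C * D, n + m, fun x => ?_⟩
  calc ‖f x * g x‖ ≤ (C * (1 + ‖x‖) ^ n) * (D * (1 + ‖x‖) ^ m) := by
        rw [norm_mul]
        exact mul_le_mul (hC x) (hD x) (norm_nonneg _) (by positivity)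
    _ = C * D * (1 + ‖x‖) ^ (n + m) := by ring

@[fun_prop]
theorem sub (hf : PolyBounded f) (hg : PolyBounded g) : PolyBounded fun x => f x - g x := by
  simpa only [neg_one_mul, ← sub_eq_add_neg] using hf.add ((polyBounded_const (-1)).mul hg)

@[fun_prop]
theorem pow (hf : PolyBounded f) (n : ℕ) : PolyBounded fun x => f x ^ n := by
  induction n with
  | zero => simpa only [pow_zero] using polyBounded_const (1 : ℝ)
  | succ n ih => simpa only [pow_succ] using ih.mul hf

theorem exists_norm_add_le {f : E → F} (hf : PolyBounded f) :
    ∃ (C : ℝ) (n : ℕ), 0 ≤ C ∧ ∀ x y, ‖f (x + y)‖ ≤ C * (1 + ‖y‖) ^ n * (1 + ‖x‖) ^ n := by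
  obtain ⟨C, n, hC0, hC⟩ := hf.exists_nonneg_norm_le
  refine ⟨C, n, hC0, fun x y => (hC _).trans ?_⟩
  rw [mul_assoc, ← mul_pow]
  gcongr
  nlinarith [norm_add_le x y, norm_nonneg x, norm_nonneg y]

theorem comp_add_right {f : E → F} (hf : PolyBounded f) (y : E) :
    PolyBounded fun x => f (x + y) := by
  obtain ⟨C, n, -, hC⟩ := hf.exists_norm_add_le
  exact ⟨hf.continuous.comp (continuous_id.add continuous_const), C * (1 + ‖y‖) ^ n, n,
    fun x => hC x y⟩

@[fun_prop]
theorem norm {f : E → F} (hf : PolyBounded f) : PolyBounded fun x => ‖f x‖ :=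
  ⟨hf.continuous.norm, by simpa using hf.exists_norm_le⟩

theorem comp_smul [NormedSpace ℝ E] {f : E → F} (hf : PolyBounded f) (t : ℝ) :
    PolyBounded fun x => f (t • x) := by
  obtain ⟨C, n, hC0, hC⟩ := hf.exists_nonneg_norm_le
  refine ⟨hf.continuous.comp (continuous_const_smul t), C * (1 + |t|) ^ n, n,
    fun x => (hC _).trans ?_⟩
  rw [mul_assoc, ← mul_pow, norm_smul, norm_eq_abs]
  gcongr
  nlinarith [norm_nonneg x, abs_nonneg t]

theorem clm_apply [NormedSpace ℝ E] {f : E → E →L[ℝ] ℝ} (hf : PolyBounded f) (v : E) :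
    PolyBounded fun x => f x v := by
  obtain ⟨C, n, -, hC⟩ := hf.exists_nonneg_norm_le
  refine ⟨hf.continuous.clm_apply continuous_const, C * ‖v‖, n, fun x => ?_⟩
  calc ‖f x v‖ ≤ ‖f x‖ * ‖v‖ := (f x).le_opNorm v
    _ ≤ C * (1 + ‖x‖) ^ n * ‖v‖ := by gcongr; exact hC x
    _ = C * ‖v‖ * (1 + ‖x‖) ^ n := by ring

end PolyBounded

namespace RapidDecay

variable {f g : E → ℝ}

theorem of_abs_le (hg : RapidDecay g) (hf : Continuous f) (hle : ∀ x, |f x| ≤ |g x|) :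
    RapidDecay f :=
  ⟨hf, fun k => (hg.exists_mul_le k).imp fun _ hC x =>
    (mul_le_mul_of_nonneg_left (hle x) (by positivity)).trans (hC x)⟩

@[fun_prop]
theorem polyBounded (hf : RapidDecay f) : PolyBounded f := by
  obtain ⟨C, hC⟩ := hf.exists_mul_le 0
  exact ⟨hf.continuous, C, 0, fun x => by simpa using hC x⟩

@[fun_prop]
theorem add (hf : RapidDecay f) (hg : RapidDecay g) : RapidDecay fun x => f x + g x := by
  refine ⟨hf.continuous.add hg.continuous, fun k => ?_⟩
  obtain ⟨C, hC⟩ := hf.exists_mul_le k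
  obtain ⟨D, hD⟩ := hg.exists_mul_le k
  refine ⟨C + D, fun x => ?_⟩
  calc (1 + ‖x‖) ^ k * |f x + g x| ≤ (1 + ‖x‖) ^ k * (|f x| + |g x|) := by
        gcongr; exact abs_add_le _ _
    _ ≤ C + D := by rw [mul_add]; exact add_le_add (hC x) (hD x)

@[fun_prop]
theorem mul_polyBounded (hf : RapidDecay f) (hg : PolyBounded g) :
    RapidDecay fun x => f x * g x := by
  obtain ⟨D, m, hD0, hD⟩ := hg.exists_nonneg_norm_le
  refine ⟨hf.continuous.mul hg.continuous, fun k => ?_⟩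
  obtain ⟨C, hC⟩ := hf.exists_mul_le (k + m)
  refine ⟨C * D, fun x => ?_⟩
  calc (1 + ‖x‖) ^ k * |f x * g x| ≤ (1 + ‖x‖) ^ k * (|f x| * (D * (1 + ‖x‖) ^ m)) := by
        rw [abs_mul]; gcongr; exact hD x
    _ = (1 + ‖x‖) ^ (k + m) * |f x| * D := by ring
    _ ≤ C * D := by gcongr; exact hC x

@[fun_prop]
theorem sub (hf : RapidDecay f) (hg : RapidDecay g) : RapidDecay fun x => f x - g x := by
  simpa only [mul_neg_one, ← sub_eq_add_neg] using
    hf.add (hg.mul_polyBounded (polyBounded_const (-1)))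

@[fun_prop]
theorem polyBounded_mul (hf : PolyBounded f) (hg : RapidDecay g) :
    RapidDecay fun x => f x * g x := by
  simpa only [mul_comm] using hg.mul_polyBounded hf

@[fun_prop]
theorem pow (hf : RapidDecay f) {n : ℕ} (hn : n ≠ 0) : RapidDecay fun x => f x ^ n := by
  obtain ⟨n, rfl⟩ := Nat.exists_eq_succ_of_ne_zero hn
  simpa only [pow_succ'] using hf.mul_polyBounded (hf.polyBounded.pow n)

variable [NormedSpace ℝ E] [FiniteDimensional ℝ E] [MeasurableSpace E] [BorelSpace E]

theorem integrable (hf : RapidDecay f) (μ : Measure E) [μ.IsAddHaarMeasure] :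
    Integrable f μ := by
  obtain ⟨C, hC⟩ := hf.exists_mul_le (Module.finrank ℝ E + 1)
  refine ((integrable_inv_one_add_norm_pow μ).const_mul C).mono'
    hf.continuous.aestronglyMeasurable (.of_forall fun x => ?_)
  rw [← div_eq_mul_inv, le_div_iff₀' (by positivity)]
  exact hC x

theorem integrable_smul [NormedSpace ℝ F] {k : E → F} (hf : RapidDecay f) (hk : PolyBounded k)
    (μ : Measure E) [μ.IsAddHaarMeasure] : Integrable (fun x => f x • k x) μ :=
  ((hf.mul_polyBounded hk.norm).integrable μ).mono
    (hf.continuous.smul hk.continuous).aestronglyMeasurable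
    (.of_forall fun x => by simp [norm_smul])

end RapidDecay

end Growth

section EulerDerivative

variable {E : Type*} [NormedAddCommGroup E] [NormedSpace ℝ E] {f f' g g' : E → ℝ}

/-- `g'` is the derivative `x · ∇g` of `g` along the Euler vector field, taken only in the radial
direction so that `g` itself need not be differentiable. -/
def HasEulerDeriv (g g' : E → ℝ) : Prop :=
  ∀ x, HasDerivAt (fun t : ℝ => g (t • x)) (g' x) 1

theorem hasEulerDeriv_of_differentiable (hg : Differentiable ℝ g) :
    HasEulerDeriv g fun x => fderiv ℝ g x x := fun x => by
  have hline : HasDerivAt (fun t : ℝ => t • x) x 1 := by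
    simpa using (hasDerivAt_id (1 : ℝ)).smul_const x
  have hcomp := (hg ((1 : ℝ) • x)).hasFDerivAt.comp_hasDerivAt 1 hline
  rwa [one_smul] at hcomp

namespace HasEulerDeriv

theorem add (hf : HasEulerDeriv f f') (hg : HasEulerDeriv g g') :
    HasEulerDeriv (fun x => f x + g x) fun x => f' x + g' x := fun x => (hf x).add (hg x)

theorem const_mul (hf : HasEulerDeriv f f') (c : ℝ) :
    HasEulerDeriv (fun x => c * f x) fun x => c * f' x := fun x => (hf x).const_mul c

theorem sub (hf : HasEulerDeriv f f') (hg : HasEulerDeriv g g') :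
    HasEulerDeriv (fun x => f x - g x) fun x => f' x - g' x := fun x => (hf x).sub (hg x)

theorem mul (hf : HasEulerDeriv f f') (hg : HasEulerDeriv g g') :
    HasEulerDeriv (fun x => f x * g x) fun x => f' x * g x + f x * g' x := fun x => by
  simpa only [one_smul] using (hf x).fun_mul (hg x)

theorem pow (hf : HasEulerDeriv f f') (n : ℕ) :
    HasEulerDeriv (fun x => f x ^ n) fun x => n * f x ^ (n - 1) * f' x := fun x => by
  simpa only [one_smul] using (hf x).fun_pow n

theorem hasDerivAt_comp_smul (hg : HasEulerDeriv g g') (x : E) {t : ℝ} (ht : t ≠ 0) :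
    HasDerivAt (fun s : ℝ => g (s • x)) (t⁻¹ * g' (t • x)) t := by
  have hscale : HasDerivAt (fun s : ℝ => s / t) t⁻¹ t := by
    simpa using (hasDerivAt_id t).div_const t
  have hray : HasDerivAt (fun s : ℝ => g (s • t • x)) (g' (t • x)) (t / t) :=
    (div_self ht).symm ▸ hg (t • x)
  rw [mul_comm]
  refine (HasDerivAt.comp (h := (· / t)) t hray hscale).congr_of_eventuallyEq
    (.of_forall fun s => ?_)
  simp [smul_smul, div_mul_cancel₀ _ ht]

end HasEulerDeriv

theorem RapidDecay.exists_comp_smul_le (hg : RapidDecay g) (k : ℕ) :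
    ∃ C : ℝ, ∀ t : ℝ, 1 / 2 ≤ t → ∀ x, (1 + ‖x‖) ^ k * |g (t • x)| ≤ C := by
  obtain ⟨C, hC⟩ := hg.exists_mul_le k
  refine ⟨2 ^ k * C, fun t ht x => ?_⟩
  have hnorm : 1 + ‖x‖ ≤ 2 * (1 + ‖t • x‖) := by
    rw [norm_smul, norm_of_nonneg (by linarith)]
    nlinarith [norm_nonneg x]
  calc (1 + ‖x‖) ^ k * |g (t • x)| ≤ (2 * (1 + ‖t • x‖)) ^ k * |g (t • x)| := by gcongr
    _ = 2 ^ k * ((1 + ‖t • x‖) ^ k * |g (t • x)|) := by rw [mul_pow, mul_assoc]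
    _ ≤ 2 ^ k * C := by gcongr; exact hC _

variable [FiniteDimensional ℝ E] [MeasurableSpace E] [BorelSpace E]
  (μ : Measure E) [μ.IsAddHaarMeasure]

theorem hasDerivAt_integral_comp_smul_mul {k : E → ℝ} (hg : RapidDecay g) (hg' : RapidDecay g')
    (hgg' : HasEulerDeriv g g') (hk : PolyBounded k) :
    HasDerivAt (fun t : ℝ => ∫ x, g (t • x) * k x ∂μ) (∫ x, g' x * k x ∂μ) 1 := by
  obtain ⟨D, m, hD0, hD⟩ := hk.exists_nonneg_norm_le
  obtain ⟨C, hC⟩ := hg'.exists_comp_smul_le (Module.finrank ℝ E + 1 + m)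
  have hball : ∀ t ∈ Metric.ball (1 : ℝ) (1 / 2), 1 / 2 < t := fun t ht => by
    linarith [(abs_lt.1 (Real.dist_eq t 1 ▸ Metric.mem_ball.1 ht)).1]
  have hbound : ∀ x, ∀ t ∈ Metric.ball (1 : ℝ) (1 / 2),
      ‖t⁻¹ * g' (t • x) * k x‖ ≤ 2 * C * D * ((1 + ‖x‖) ^ (Module.finrank ℝ E + 1))⁻¹ := by
    intro x t ht
    have htinv : ‖t⁻¹‖ ≤ 2 := by
      rw [norm_inv, norm_of_nonneg (by linarith [hball t ht])]
      exact inv_le_of_inv_le₀ two_pos (by linarith [hball t ht])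
    rw [← div_eq_mul_inv, le_div_iff₀' (by positivity)]
    calc (1 + ‖x‖) ^ (Module.finrank ℝ E + 1) * ‖t⁻¹ * g' (t • x) * k x‖
        ≤ (1 + ‖x‖) ^ (Module.finrank ℝ E + 1) * (2 * |g' (t • x)| * (D * (1 + ‖x‖) ^ m)) := by
          rw [norm_mul, norm_mul, norm_eq_abs (g' _)]
          gcongr
          exact hD x
      _ = 2 * ((1 + ‖x‖) ^ (Module.finrank ℝ E + 1 + m) * |g' (t • x)|) * D := by ring
      _ ≤ 2 * C * D := by gcongr; exact hC t (hball t ht).le x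
  have hmeas : ∀ t : ℝ, AEStronglyMeasurable (fun x => g (t • x) * k x) μ := fun t =>
    ((hg.continuous.comp (continuous_const_smul t)).mul hk.continuous).aestronglyMeasurable
  have hderiv := (hasDerivAt_integral_of_dominated_loc_of_deriv_le
    (F' := fun t x => t⁻¹ * g' (t • x) * k x) (Metric.ball_mem_nhds 1 one_half_pos)
    (.of_forall hmeas) (by simpa using (hg.mul_polyBounded hk).integrable μ)
    (by simpa using (hg'.mul_polyBounded hk).continuous.aestronglyMeasurable)
    (.of_forall hbound) ((integrable_inv_one_add_norm_pow μ).const_mul _)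
    (.of_forall fun x t ht => (hgg'.hasDerivAt_comp_smul x
      (by linarith [hball t ht] : t ≠ 0)).mul_const (k x))).2
  simpa using hderiv

/-- The integral of `g (t • x)` is `t ^ (-dim E)` times that of `g`; differentiate at `t = 1`. -/
theorem integral_eulerDeriv (hg : RapidDecay g) (hg' : RapidDecay g') (hgg' : HasEulerDeriv g g') :
    ∫ x, g' x ∂μ = -(Module.finrank ℝ E : ℝ) * ∫ x, g x ∂μ := by
  have hderiv := hasDerivAt_integral_comp_smul_mul μ hg hg' hgg' (polyBounded_const (1 : ℝ))
  have hpow : HasDerivAt (fun t : ℝ => t ^ (-(Module.finrank ℝ E : ℤ)) * ∫ x, g x ∂μ)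
      (-(Module.finrank ℝ E : ℝ) * ∫ x, g x ∂μ) 1 := by
    simpa using (hasDerivAt_zpow (-(Module.finrank ℝ E : ℤ)) (1 : ℝ) (.inl one_ne_zero)).mul_const
      (∫ x, g x ∂μ)
  simp only [mul_one] at hderiv
  refine hderiv.unique (hpow.congr_of_eventuallyEq ?_)
  filter_upwards [eventually_gt_nhds one_pos] with t ht
  rw [Measure.integral_comp_smul_of_nonneg _ _ _ (hR := ht.le), smul_eq_mul, zpow_neg,
    zpow_natCast]

end EulerDerivative

section Homogeneous

variable {E F : Type*} [NormedAddCommGroup E] [NormedSpace ℝ E] [FiniteDimensional ℝ E]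
  [NormedAddCommGroup F] [NormedSpace ℝ F]

theorem polyBounded_of_homogeneous {g : E → F} {q : ℝ} (hg : Continuous g)
    (hhom : ∀ t : ℝ, 0 < t → ∀ x, g (t • x) = t ^ q • g x) : PolyBounded g := by
  obtain ⟨M, hM⟩ := (isCompact_closedBall (0 : E) 1).exists_bound_of_continuousOn hg.continuousOn
  have hM0 : 0 ≤ M := (norm_nonneg _).trans (hM 0 (by simp))
  refine ⟨hg, M, ⌈q⌉₊, fun x => ?_⟩
  rcases le_total ‖x‖ 1 with hx | hx
  · calc ‖g x‖ ≤ M * 1 := by rw [mul_one]; exact hM x (by simpa using hx)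
      _ ≤ M * (1 + ‖x‖) ^ ⌈q⌉₊ := by
        gcongr
        exact one_le_pow₀ (by linarith [norm_nonneg x])
  · have hx0 : 0 < ‖x‖ := one_pos.trans_le hx
    calc ‖g x‖ = ‖x‖ ^ q * ‖g (‖x‖⁻¹ • x)‖ := by
          rw [← abs_of_pos (rpow_pos_of_pos hx0 q), ← norm_eq_abs, ← norm_smul, ← hhom _ hx0,
            smul_inv_smul₀ hx0.ne']
      _ ≤ (1 + ‖x‖) ^ ⌈q⌉₊ * M := by
        gcongr
        · calc ‖x‖ ^ q ≤ ‖x‖ ^ (⌈q⌉₊ : ℝ) := rpow_le_rpow_of_exponent_le hx (Nat.le_ceil q)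
            _ ≤ (1 + ‖x‖) ^ ⌈q⌉₊ := by rw [rpow_natCast]; gcongr; linarith
        · exact hM _ (by simp [norm_smul, hx0.ne'])
      _ = M * (1 + ‖x‖) ^ ⌈q⌉₊ := mul_comm _ _

end Homogeneous

namespace Homog

variable {h : R2 → ℝ} {p : ℝ}

theorem polyBounded (hh : Homog h p) (hc : Continuous h) : PolyBounded h :=
  polyBounded_of_homogeneous hc hh

theorem fderiv_smul (hh : Homog h p) (hd : Differentiable ℝ h) {t : ℝ} (ht : 0 < t) (x : R2) :
    fderiv ℝ h (t • x) = t ^ (p - 1) • fderiv ℝ h x := by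
  have hscaled : t • fderiv ℝ h (t • x) = t ^ p • fderiv ℝ h x := by
    rw [← fderiv_comp_smul, funext (hh t ht), fderiv_const_mul (hd x)]
  rw [rpow_sub_one ht.ne', div_eq_inv_mul, mul_smul, ← hscaled, inv_smul_smul₀ ht.ne']

theorem polyBounded_fderiv (hh : Homog h p) (hs : ContDiff ℝ 1 h) : PolyBounded (fderiv ℝ h) :=
  polyBounded_of_homogeneous (hs.continuous_fderiv one_ne_zero)
    fun _ ht => hh.fderiv_smul (hs.differentiable one_ne_zero) ht

theorem fderiv_self (hh : Homog h p) (hd : Differentiable ℝ h) (x : R2) :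
    fderiv ℝ h x x = p * h x := by
  have hpow : HasDerivAt (fun t : ℝ => t ^ p * h x) (p * h x) 1 := by
    simpa using (hasDerivAt_rpow_const (x := 1) (p := p) (.inl one_ne_zero)).mul_const (h x)
  refine (hasEulerDeriv_of_differentiable hd x).unique (hpow.congr_of_eventuallyEq ?_)
  filter_upwards [eventually_gt_nhds one_pos] with t ht using hh t ht x

theorem hasEulerDeriv_comp_add_right (hh : Homog h p) (hd : Differentiable ℝ h) (y : R2) :
    HasEulerDeriv (fun x => h (x + y)) fun x => p * h (x + y) - fderiv ℝ h (x + y) y := by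
  have htranslate : Differentiable ℝ fun x => h (x + y) :=
    hd.comp (differentiable_id.add_const y)
  convert hasEulerDeriv_of_differentiable htranslate using 2 with x
  rw [fderiv_comp_add_right, ← hh.fderiv_self hd, ← map_sub, add_sub_cancel_right]

end Homog

section WeightedAverage

variable {E : Type*} [NormedAddCommGroup E] [NormedSpace ℝ E] [FiniteDimensional ℝ E]
  [MeasurableSpace E] [BorelSpace E] (μ : Measure E) [μ.IsAddHaarMeasure] {h ρ : E → ℝ}

theorem hasFDerivAt_integral_comp_add_mul (hd : Differentiable ℝ h) (hh : PolyBounded h)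
    (hdh : PolyBounded (fderiv ℝ h)) (hρ : RapidDecay ρ) (y : E) :
    HasFDerivAt (fun z => ∫ x, h (x + z) * ρ x ∂μ) (∫ x, ρ x • fderiv ℝ h (x + y) ∂μ) y := by
  obtain ⟨C, n, hC0, hC⟩ := hdh.exists_norm_add_le
  have hmeas : ∀ z, AEStronglyMeasurable (fun x => h (x + z) * ρ x) μ := fun z =>
    ((hh.comp_add_right z).continuous.mul hρ.continuous).aestronglyMeasurable
  have hbound : ∀ x, ∀ z ∈ Metric.ball y 1,
      ‖ρ x • fderiv ℝ h (x + z)‖ ≤ ‖ρ x * (C * (2 + ‖y‖) ^ n * (1 + ‖x‖) ^ n)‖ := by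
    intro x z hz
    have hz' : 1 + ‖z‖ ≤ 2 + ‖y‖ := by
      linarith [norm_le_norm_add_norm_sub' z y, mem_ball_iff_norm.1 hz]
    rw [norm_smul, norm_mul]
    gcongr
    rw [norm_of_nonneg (by positivity)]
    exact (hC x z).trans (by gcongr)
  have hweight : PolyBounded fun x : E => C * (2 + ‖y‖) ^ n * (1 + ‖x‖) ^ n := by fun_prop
  refine hasFDerivAt_integral_of_dominated_of_fderiv_le (Metric.ball_mem_nhds y one_pos)
    (.of_forall hmeas) ?_ ?_ (.of_forall hbound)
    ((hρ.mul_polyBounded hweight).integrable μ).norm (.of_forall fun x z _ => ?_)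
  · simpa only [mul_comm] using (hρ.mul_polyBounded (hh.comp_add_right y)).integrable μ
  · exact (hρ.continuous.smul (hdh.comp_add_right y).continuous).aestronglyMeasurable
  · exact ((hasFDerivAt_comp_add_left x).2 (hd (x + z)).hasFDerivAt).mul_const (ρ x)

theorem fderiv_integral_comp_add_mul_apply (hd : Differentiable ℝ h) (hh : PolyBounded h)
    (hdh : PolyBounded (fderiv ℝ h)) (hρ : RapidDecay ρ) (y v : E) :
    fderiv ℝ (fun z => ∫ x, h (x + z) * ρ x ∂μ) y v = ∫ x, ρ x * fderiv ℝ h (x + y) v ∂μ := by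
  rw [(hasFDerivAt_integral_comp_add_mul μ hd hh hdh hρ y).fderiv,
    ContinuousLinearMap.integral_apply (hρ.integrable_smul (hdh.comp_add_right y) μ)]
  rfl

end WeightedAverage

section Hfun

variable {h w : R2 → ℝ} {y₀ : R2}

theorem integral_sq_mul_fderiv_eq_zero_of_gradient_Hfun_eq_zero {p : ℝ} (hs : ContDiff ℝ 1 h)
    (hh : Homog h p) (hw : RapidDecay w) (hcrit : gradient (Hfun h w) y₀ = 0) (v : R2) :
    ∫ x, w x ^ 2 * fderiv ℝ h (x + y₀) v = 0 := by
  rw [← fderiv_integral_comp_add_mul_apply volume (hs.differentiable one_ne_zero)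
    (hh.polyBounded hs.continuous) (hh.polyBounded_fderiv hs) (hw.pow two_ne_zero) y₀ v]
  change fderiv ℝ (Hfun h w) y₀ v = 0
  rw [← inner_gradient_left, hcrit, inner_zero_left]

theorem Hfun_pos (hh : PolyBounded h) (hnonneg : ∀ x, 0 ≤ h x) (hw : RapidDecay w)
    (hpos : ∀ x, 0 < w x) (huniq : ∀ y, gradient (Hfun h w) y = 0 → y = y₀) :
    0 < Hfun h w y₀ := by
  have hprod : RapidDecay fun x => h (x + y₀) * w x ^ 2 := by
    simpa only [mul_comm] using (hw.pow two_ne_zero).mul_polyBounded (hh.comp_add_right y₀)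
  have hprod_nonneg : 0 ≤ fun x => h (x + y₀) * w x ^ 2 :=
    fun x => mul_nonneg (hnonneg _) (sq_nonneg _)
  refine (integral_nonneg hprod_nonneg).lt_of_ne' fun hzero => ?_
  have hprod_zero : (fun x => h (x + y₀) * w x ^ 2) = 0 :=
    hprod.continuous.ae_eq_iff_eq volume continuous_zero |>.1 <|
      (integral_eq_zero_iff_of_nonneg hprod_nonneg (hprod.integrable volume)).1 hzero
  have hh_zero : ∀ x, h x = 0 := fun x => by
    simpa [(hpos (x - y₀)).ne'] using congrFun hprod_zero (x - y₀)
  have hcrit : ∀ y, gradient (Hfun h w) y = 0 := fun y => by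
    have hconst : Hfun h w = fun _ => 0 := funext fun z => by simp [Hfun, hh_zero]
    rw [hconst, gradient_fun_const]
  obtain ⟨y, hy⟩ := exists_ne y₀
  exact hy (huniq y (hcrit y))

end Hfun

section SecondDerivative

variable {E : Type*} [NormedAddCommGroup E] [NormedSpace ℝ E] {f g : E → ℝ}

theorem contDiff_one_fderiv_apply (hf : ContDiff ℝ 2 f) (e : E) :
    ContDiff ℝ 1 fun x => fderiv ℝ f x e :=
  (hf.fderiv_right (m := 1) (by norm_num)).clm_apply contDiff_const

theorem continuous_fderiv_apply (hf : ContDiff ℝ 1 f) (e : E) :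
    Continuous fun x => fderiv ℝ f x e :=
  (hf.continuous_fderiv one_ne_zero).clm_apply continuous_const

theorem fderiv_fderiv_comp_smul (f : E → ℝ) (e : E) (s : ℝ) (x : E) :
    fderiv ℝ (fun y => fderiv ℝ (fun z => f (s • z)) y e) x e =
      s ^ 2 * fderiv ℝ (fun y => fderiv ℝ f y e) (s • x) e := by
  simp only [fderiv_comp_smul, smul_apply, smul_eq_mul]
  change fderiv ℝ (s • fun y => fderiv ℝ f (s • y) e) x e = _
  rw [fderiv_const_smul_field, Pi.smul_apply, smul_apply,
    fderiv_comp_smul (f := fun y => fderiv ℝ f y e), smul_apply, smul_smul, ← sq, smul_eq_mul]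

theorem fderiv_fderiv_mul (hf : ContDiff ℝ 2 f) (hg : ContDiff ℝ 2 g) (e x : E) :
    fderiv ℝ (fun y => fderiv ℝ (fun z => f z * g z) y e) x e =
      f x * fderiv ℝ (fun y => fderiv ℝ g y e) x e + 2 * (fderiv ℝ f x e * fderiv ℝ g x e) +
        fderiv ℝ (fun y => fderiv ℝ f y e) x e * g x := by
  have hdf := hf.differentiable two_ne_zero
  have hdg := hg.differentiable two_ne_zero
  have hdf' := (contDiff_one_fderiv_apply hf e).differentiable one_ne_zero
  have hdg' := (contDiff_one_fderiv_apply hg e).differentiable one_ne_zero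
  have hfirst : (fun y => fderiv ℝ (fun z => f z * g z) y e) =
      fun y => f y * fderiv ℝ g y e + g y * fderiv ℝ f y e := funext fun y => by
    rw [fderiv_fun_mul (hdf y) (hdg y)]
    rfl
  rw [hfirst, fderiv_fun_add ((hdf x).fun_mul (hdg' x)) ((hdg x).fun_mul (hdf' x)),
    fderiv_fun_mul (hdf x) (hdg' x), fderiv_fun_mul (hdg x) (hdf' x)]
  simp only [add_apply, smul_apply, smul_eq_mul]
  ring

variable [MeasurableSpace E] [BorelSpace E] (μ : Measure E)

theorem tendsto_integral_comp_smul_mul {φ F : E → ℝ} (hφ : Continuous φ)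
    (hsupp : HasCompactSupport φ) (hF : Integrable F μ) :
    Tendsto (fun s : ℝ => ∫ x, φ (s • x) * F x ∂μ) (𝓝 0) (𝓝 (φ 0 * ∫ x, F x ∂μ)) := by
  obtain ⟨K, hK⟩ := hsupp.exists_bound_of_continuous hφ
  rw [← integral_const_mul]
  refine tendsto_integral_filter_of_dominated_convergence (fun x => K * ‖F x‖)
    (.of_forall fun s => ?_) (.of_forall fun s => .of_forall fun x => ?_) (hF.norm.const_mul K)
    (.of_forall fun x => ?_)
  · exact (hφ.comp (continuous_const_smul s)).aestronglyMeasurable.mul hF.aestronglyMeasurable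
  · rw [norm_mul]
    gcongr
    exact hK _
  · have hcont : Continuous fun s : ℝ => φ (s • x) * F x := by fun_prop
    simpa using hcont.tendsto 0

variable [FiniteDimensional ℝ E] [μ.IsAddHaarMeasure]

theorem integral_mul_fderiv_apply_of_hasCompactSupport (hf : ContDiff ℝ 1 f) (hg : ContDiff ℝ 1 g)
    (hsupp : HasCompactSupport f) (e : E) :
    ∫ x, f x * fderiv ℝ g x e ∂μ = -∫ x, fderiv ℝ f x e * g x ∂μ :=
  integral_mul_fderiv_eq_neg_fderiv_mul_of_integrable
    (((continuous_fderiv_apply hf e).mul hg.continuous).integrable_of_hasCompactSupport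
      (hsupp.fderiv_apply ℝ e).mul_right)
    ((hf.continuous.mul (continuous_fderiv_apply hg e)).integrable_of_hasCompactSupport
      hsupp.mul_right)
    ((hf.continuous.mul hg.continuous).integrable_of_hasCompactSupport hsupp.mul_right)
    (fun x _ => hf.differentiable one_ne_zero x) (fun x _ => hg.differentiable one_ne_zero x)

theorem integral_mul_fderiv_fderiv_of_hasCompactSupport (hf : ContDiff ℝ 2 f) (hg : ContDiff ℝ 2 g)
    (hsupp : HasCompactSupport f) (e : E) :
    ∫ x, f x * fderiv ℝ (fun y => fderiv ℝ g y e) x e ∂μ =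
      ∫ x, fderiv ℝ (fun y => fderiv ℝ f y e) x e * g x ∂μ := by
  rw [integral_mul_fderiv_apply_of_hasCompactSupport μ (hf.of_le one_le_two)
      (contDiff_one_fderiv_apply hg e) hsupp,
    integral_mul_fderiv_apply_of_hasCompactSupport μ (contDiff_one_fderiv_apply hf e)
      (hg.of_le one_le_two) (hsupp.fderiv_apply ℝ e), neg_neg]

end SecondDerivative

section Laplacian

variable {f g v : R2 → ℝ}

theorem continuous_lap (hf : ContDiff ℝ 2 f) : Continuous (lap f) :=
  continuous_finsetSum _ fun _ _ => continuous_fderiv_apply (contDiff_one_fderiv_apply hf _) _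

theorem hasCompactSupport_lap (hf : HasCompactSupport f) : HasCompactSupport (lap f) := by
  have hsum : lap f = ∑ i : Fin 2, fun x => fderiv ℝ
      (fun y => fderiv ℝ f y (EuclideanSpace.single i 1)) x (EuclideanSpace.single i 1) := by
    ext x
    simp only [lap, Finset.sum_apply]
  rw [hsum, Fin.sum_univ_two]
  exact ((hf.fderiv_apply ℝ _).fderiv_apply ℝ _).add ((hf.fderiv_apply ℝ _).fderiv_apply ℝ _)

theorem lap_comp_smul (f : R2 → ℝ) (s : ℝ) (x : R2) :
    lap (fun y => f (s • y)) x = s ^ 2 * lap f (s • x) := by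
  simp only [lap, fderiv_fderiv_comp_smul, Finset.mul_sum]

theorem lap_mul (hf : ContDiff ℝ 2 f) (hg : ContDiff ℝ 2 g) (x : R2) :
    lap (fun y => f y * g y) x = f x * lap g x + 2 * (∑ i : Fin 2,
      fderiv ℝ f x (EuclideanSpace.single i 1) * fderiv ℝ g x (EuclideanSpace.single i 1)) +
      lap f x * g x := by
  simp only [lap, fderiv_fderiv_mul hf hg, Finset.sum_add_distrib, Finset.mul_sum, Finset.sum_mul]

theorem integral_mul_lap_of_hasCompactSupport (hf : ContDiff ℝ 2 f) (hg : ContDiff ℝ 2 g)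
    (hsupp : HasCompactSupport f) : ∫ x, f x * lap g x = ∫ x, lap f x * g x := by
  simp only [lap, Finset.mul_sum, Finset.sum_mul]
  rw [integral_finsetSum, integral_finsetSum]
  · exact Finset.sum_congr rfl fun i _ =>
      integral_mul_fderiv_fderiv_of_hasCompactSupport volume hf hg hsupp _
  · exact fun i _ => ((continuous_fderiv_apply (contDiff_one_fderiv_apply hf _) _).mul
      hg.continuous).integrable_of_hasCompactSupport
        ((hsupp.fderiv_apply ℝ _).fderiv_apply ℝ _).mul_right
  · exact fun i _ => (hf.continuous.mul (continuous_fderiv_apply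
      (contDiff_one_fderiv_apply hg _) _)).integrable_of_hasCompactSupport hsupp.mul_right

theorem integral_comp_smul_mul_lap {φ : R2 → ℝ} (hφ : ContDiff ℝ 2 φ) (hsupp : HasCompactSupport φ)
    (hv : ContDiff ℝ 2 v) (hf : ContDiff ℝ 2 f) {s : ℝ} (hs : s ≠ 0) :
    ∫ x, φ (s • x) * (v x * lap f x) =
      (∫ x, φ (s • x) * (lap v x * f x)) +
        2 * s * (∑ i : Fin 2, ∫ x, fderiv ℝ φ (s • x) (EuclideanSpace.single i 1) *
          (fderiv ℝ v x (EuclideanSpace.single i 1) * f x)) +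
        s ^ 2 * ∫ x, lap φ (s • x) * (v x * f x) := by
  have hcut : ContDiff ℝ 2 fun x : R2 => φ (s • x) := hφ.comp (contDiff_const_smul s)
  have hcut_supp : HasCompactSupport fun x : R2 => φ (s • x) := hsupp.comp_smul hs
  have hintegrable : ∀ {ψ k : R2 → ℝ}, Continuous ψ → HasCompactSupport ψ → Continuous k →
      Integrable fun x => ψ (s • x) * k x := fun hψ hψs hk =>
    ((hψ.comp (continuous_const_smul s)).mul hk).integrable_of_hasCompactSupport
      (hψs.comp_smul hs).mul_right
  have hzeroth := hintegrable hφ.continuous hsupp ((continuous_lap hv).fun_mul hf.continuous)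
  have hfirst : ∀ i : Fin 2, Integrable fun x => fderiv ℝ φ (s • x) (EuclideanSpace.single i 1) *
      (fderiv ℝ v x (EuclideanSpace.single i 1) * f x) := fun i =>
    hintegrable (contDiff_one_fderiv_apply hφ _).continuous
      (hsupp.fderiv_apply ℝ (EuclideanSpace.single i 1))
      ((contDiff_one_fderiv_apply hv (EuclideanSpace.single i 1)).continuous.mul hf.continuous)
  have hsecond := hintegrable (continuous_lap hφ) (hasCompactSupport_lap hsupp)
    (hv.continuous.fun_mul hf.continuous)
  have hsum := integrable_finsetSum Finset.univ fun i _ => hfirst i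
  have hgreen := integral_mul_lap_of_hasCompactSupport (hcut.mul hv) hf hcut_supp.mul_right
  rw [← integral_finsetSum _ fun i _ => hfirst i, ← integral_const_mul, ← integral_const_mul,
    ← integral_add hzeroth (hsum.const_mul _), ← integral_add (hzeroth.fun_add (hsum.const_mul _))
      (hsecond.const_mul _)]
  simp only [← mul_assoc]
  refine hgreen.trans (integral_congr_ae (.of_forall fun x => ?_))
  simp only [lap_mul hcut hv, lap_comp_smul, fderiv_comp_smul, smul_apply, smul_eq_mul,
    Fin.sum_univ_two]
  ring

/-- Green's identity: cut off by `φ (s • x)` and let `s → 0`. -/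
theorem integral_mul_lap (hv : ContDiff ℝ 2 v) (hf : ContDiff ℝ 2 f)
    (hvf : Integrable fun x => v x * f x)
    (hdvf : ∀ i : Fin 2, Integrable fun x => fderiv ℝ v x (EuclideanSpace.single i 1) * f x)
    (hlvf : Integrable fun x => lap v x * f x) (hvlf : Integrable fun x => v x * lap f x) :
    ∫ x, v x * lap f x = ∫ x, lap v x * f x := by
  let φ : ContDiffBump (0 : R2) := ⟨1, 2, one_pos, one_lt_two⟩
  have hφ : ContDiff ℝ 2 φ := φ.contDiff
  have hsupp : HasCompactSupport φ := φ.hasCompactSupport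
  have hid : Tendsto (fun s : ℝ => s) (𝓝 0) (𝓝 0) := tendsto_id
  have hleft := tendsto_integral_comp_smul_mul volume hφ.continuous hsupp hvlf
  have hright := ((tendsto_integral_comp_smul_mul volume hφ.continuous hsupp hlvf).add
    ((hid.const_mul 2).mul (tendsto_finsetSum Finset.univ fun i _ =>
      tendsto_integral_comp_smul_mul volume (contDiff_one_fderiv_apply hφ _).continuous
        (hsupp.fderiv_apply ℝ (EuclideanSpace.single i 1)) (hdvf i)))).add
    ((hid.pow 2).mul (tendsto_integral_comp_smul_mul volume (continuous_lap hφ)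
      (hasCompactSupport_lap hsupp) hvf))
  have hφ0 : φ 0 = 1 := φ.one_of_mem_closedBall (by simp [φ])
  simp only [hφ0, one_mul, mul_zero, zero_mul, ne_eq, OfNat.ofNat_ne_zero, not_false_eq_true,
    zero_pow, add_zero] at hleft hright
  refine tendsto_nhds_unique (l := 𝓝[≠] 0) (hleft.mono_left nhdsWithin_le_nhds)
    ((hright.mono_left nhdsWithin_le_nhds).congr' ?_)
  filter_upwards [self_mem_nhdsWithin] with s (hs : s ≠ 0)
  exact (integral_comp_smul_mul_lap hφ hsupp hv hf hs).symm

end Laplacian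

/-- `Δg = k` in the weak sense, tested against `C²` functions `f` such that `f` and `Δf` have
polynomial growth. The growth of `∇f` is left unconstrained: nothing is known about `∇ψ₁` and
`∇ψ₅`. -/
def IsWeakLap (g k : R2 → ℝ) : Prop :=
  ∀ f : R2 → ℝ, ContDiff ℝ 2 f → PolyBounded f → PolyBounded (lap f) →
    ∫ x, g x * lap f x = ∫ x, k x * f x

theorem isWeakLap_lap {g : R2 → ℝ} (hg : ContDiff ℝ 2 g) (hdecay : RapidDecay g)
    (hdecay_fderiv : ∀ i, RapidDecay fun x => fderiv ℝ g x (EuclideanSpace.single i 1))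
    (hdecay_lap : RapidDecay (lap g)) : IsWeakLap g (lap g) := fun _ hf hfb hlfb =>
  integral_mul_lap hg hf ((hdecay.mul_polyBounded hfb).integrable volume)
    (fun i => ((hdecay_fderiv i).mul_polyBounded hfb).integrable volume)
    ((hdecay_lap.mul_polyBounded hfb).integrable volume)
    ((hdecay.mul_polyBounded hlfb).integrable volume)

theorem polyBounded_lap_of_polyBounded_Lop {w f : R2 → ℝ} (hw : PolyBounded w)
    (hf : PolyBounded f) (hLf : PolyBounded (Lop w f)) : PolyBounded (lap f) := by
  have hlap : lap f = fun x => (1 - 3 * w x ^ 2) * f x - Lop w f x := funext fun x => by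
    rw [Lop]; ring
  rw [hlap]
  fun_prop

namespace IsWeakLap

variable {g g' k k' g₁ g₂ k₁ k₂ : R2 → ℝ}

theorem add (h₁ : IsWeakLap g₁ k₁) (h₂ : IsWeakLap g₂ k₂) (hg₁ : RapidDecay g₁)
    (hg₂ : RapidDecay g₂) (hk₁ : RapidDecay k₁) (hk₂ : RapidDecay k₂) :
    IsWeakLap (fun x => g₁ x + g₂ x) fun x => k₁ x + k₂ x := fun f hf hfb hlfb => by
  simp only [add_mul]
  rw [integral_add ((hg₁.mul_polyBounded hlfb).integrable volume)
      ((hg₂.mul_polyBounded hlfb).integrable volume),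
    integral_add ((hk₁.mul_polyBounded hfb).integrable volume)
      ((hk₂.mul_polyBounded hfb).integrable volume), h₁ f hf hfb hlfb, h₂ f hf hfb hlfb]

theorem comp_smul (h : IsWeakLap g k) {t : ℝ} (ht : t ≠ 0) :
    IsWeakLap (fun x => g (t • x)) fun x => t ^ 2 * k (t • x) := fun f hf hfb hlfb => by
  have hlap : ∀ y, lap f (t⁻¹ • y) = t ^ 2 * lap (fun z => f (t⁻¹ • z)) y := fun y => by
    rw [lap_comp_smul, ← mul_assoc, ← mul_pow, mul_inv_cancel₀ ht, one_pow, one_mul]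
  have hweak : ∫ y, g y * lap f (t⁻¹ • y) = ∫ y, t ^ 2 * k y * f (t⁻¹ • y) := by
    simp only [hlap, mul_assoc, mul_left_comm (g _), integral_const_mul]
    rw [h (fun z => f (t⁻¹ • z)) (hf.comp (contDiff_const_smul t⁻¹)) (hfb.comp_smul t⁻¹)]
    rw [funext (lap_comp_smul f t⁻¹)]
    exact (polyBounded_const _).mul (hlfb.comp_smul t⁻¹)
  have hleft := Measure.integral_comp_smul volume (fun y => g y * lap f (t⁻¹ • y)) t
  have hright := Measure.integral_comp_smul volume (fun y => t ^ 2 * k y * f (t⁻¹ • y)) t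
  simp only [inv_smul_smul₀ ht] at hleft hright
  rw [hleft, hright, hweak]

/-- The weak form of the commutator identity `Δ(x · ∇g) = 2Δg + x · ∇Δg`. -/
theorem eulerDeriv (h : IsWeakLap g k) (hg : RapidDecay g) (hg' : RapidDecay g')
    (hk : RapidDecay k) (hk' : RapidDecay k') (hgg' : HasEulerDeriv g g')
    (hkk' : HasEulerDeriv k k') : IsWeakLap g' fun x => 2 * k x + k' x := fun f hf hfb hlfb => by
  have hleft := hasDerivAt_integral_comp_smul_mul volume hg hg' hgg' hlfb
  have hright := ((hasDerivAt_id (1 : ℝ)).fun_pow 2).mul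
    (hasDerivAt_integral_comp_smul_mul volume hk hk' hkk' hfb)
  have heq : (fun t : ℝ => ∫ x, g (t • x) * lap f x) =ᶠ[𝓝 1]
      (fun t : ℝ => t ^ 2) * fun t => ∫ x, k (t • x) * f x := by
    filter_upwards [eventually_ne_nhds one_ne_zero] with t ht
    simp only [h.comp_smul ht f hf hfb hlfb, mul_assoc, integral_const_mul, Pi.mul_apply]
  rw [(hleft.congr_of_eventuallyEq heq.symm).unique hright]
  simp only [add_mul, mul_assoc, one_smul, id_eq]
  rw [integral_add (((hk.mul_polyBounded hfb).integrable volume).const_mul 2)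
    ((hk'.mul_polyBounded hfb).integrable volume), integral_const_mul]
  norm_num

theorem integral_mul_Lop {w f : R2 → ℝ} (h : IsWeakLap g k) (hg : RapidDecay g)
    (hk : RapidDecay k) (hw : PolyBounded w) (hf : ContDiff ℝ 2 f) (hfb : PolyBounded f)
    (hLf : PolyBounded (Lop w f)) :
    ∫ x, g x * Lop w f x = ∫ x, ((1 - 3 * w x ^ 2) * g x - k x) * f x := by
  have hlfb := polyBounded_lap_of_polyBounded_Lop hw hfb hLf
  have hpot : Integrable fun x => g x * ((1 - 3 * w x ^ 2) * f x) :=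
    (hg.mul_polyBounded (by fun_prop)).integrable volume
  calc ∫ x, g x * Lop w f x = ∫ x, (g x * ((1 - 3 * w x ^ 2) * f x) - g x * lap f x) := by
        congr with x; rw [Lop]; ring
    _ = (∫ x, g x * ((1 - 3 * w x ^ 2) * f x)) - ∫ x, k x * f x := by
        rw [integral_sub hpot ((hg.mul_polyBounded hlfb).integrable volume), h f hf hfb hlfb]
    _ = ∫ x, ((1 - 3 * w x ^ 2) * g x - k x) * f x := by
        rw [← integral_sub hpot ((hk.mul_polyBounded hfb).integrable volume)]
        congr with x; ring

end IsWeakLap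

/-- `v = w + x · ∇w` is the derivative at `t = 1` of the dilation `t ↦ t w(t ·)`, which preserves
the norm of `L²(ℝ²)`, and `v' = x · ∇v`; all three functions decay rapidly. -/
structure HasDilationJet (w v v' : R2 → ℝ) : Prop where
  rapidDecay : RapidDecay w
  rapidDecay_deriv : RapidDecay v
  rapidDecay_deriv₂ : RapidDecay v'
  hasEulerDeriv : HasEulerDeriv w fun x => v x - w x
  hasEulerDeriv_deriv : HasEulerDeriv v v'

theorem integral_eulerDeriv_add_two_mul {g g' : R2 → ℝ} (hg : RapidDecay g) (hg' : RapidDecay g')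
    (hgg' : HasEulerDeriv g g') : ∫ x, (g' x + 2 * g x) = 0 := by
  rw [integral_add (hg'.integrable volume) ((hg.integrable volume).const_mul 2),
    integral_const_mul, integral_eulerDeriv volume hg hg' hgg', finrank_euclideanSpace_fin]
  norm_num

namespace HasDilationJet

variable {w v v' : R2 → ℝ}

section Moments

variable {k d : R2 → ℝ} {p : ℝ}

/-- Since `∫ (t w(t x))⁴ dx` is a multiple of `t²`, it is annihilated by `∂ₜ² - ∂ₜ` at `t = 1`. -/
theorem integral_quartic_second_variation (hjet : HasDilationJet w v v') :
    ∫ x, (3 * w x ^ 2 * v x ^ 2 - w x ^ 3 * v x + w x ^ 3 * v' x) = 0 := by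
  obtain ⟨hw, hv, hv', hwd, hvd⟩ := hjet
  rw [← integral_eulerDeriv_add_two_mul (by fun_prop (disch := simp))
    (by fun_prop (disch := simp)) ((hwd.pow 3).mul hvd)]
  congr with x
  simp only [Nat.cast_ofNat, Nat.reduceSub]
  ring

theorem two_mul_integral_mul_mul (hjet : HasDilationJet w v v') (hk : PolyBounded k)
    (hd : PolyBounded d) (hkd : HasEulerDeriv k fun x => p * k x - d x)
    (hzero : ∫ x, w x ^ 2 * d x = 0) :
    2 * ∫ x, w x * v x * k x = -p * ∫ x, w x ^ 2 * k x := by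
  obtain ⟨hw, hv, -, hwd, -⟩ := hjet
  have heuler := integral_eulerDeriv_add_two_mul (by fun_prop (disch := simp))
    (by fun_prop (disch := simp)) ((hwd.pow 2).mul hkd)
  have hsplit : ∫ x, (2 * (w x * v x * k x) + p * (w x ^ 2 * k x) - w x ^ 2 * d x) = 0 := by
    rw [← heuler]
    congr with x
    simp only [Nat.cast_ofNat, Nat.reduceSub]
    ring
  rw [integral_sub, integral_add, integral_const_mul, integral_const_mul, hzero] at hsplit
  · linarith
  all_goals exact RapidDecay.integrable (by fun_prop (disch := simp)) volume

/-- For `d = 0` the integral `∫ k(x) (t w(t x))² dx` is a multiple of `t ^ (-p)`, to which half of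
`∂ₜ² - ∂ₜ` is applied at `t = 1`. -/
theorem integral_potential_second_variation (hjet : HasDilationJet w v v') (hk : PolyBounded k)
    (hd : PolyBounded d) (hkd : HasEulerDeriv k fun x => p * k x - d x)
    (hzero : ∫ x, w x ^ 2 * d x = 0) :
    ∫ x, (v x ^ 2 * k x - w x * v x * k x + w x * v' x * k x - w x * v x * d x) =
      (2 + p) * (p / 2 * ∫ x, w x ^ 2 * k x) := by
  have hfirst := hjet.two_mul_integral_mul_mul hk hd hkd hzero
  obtain ⟨hw, hv, hv', hwd, hvd⟩ := hjet
  have heuler := integral_eulerDeriv_add_two_mul (by fun_prop (disch := simp))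
    (by fun_prop (disch := simp)) ((hwd.mul hvd).mul hkd)
  have hsplit : ∫ x, ((v x ^ 2 * k x - w x * v x * k x + w x * v' x * k x - w x * v x * d x) +
      (2 + p) * (w x * v x * k x)) = 0 := by
    rw [← heuler]
    congr with x
    ring
  rw [integral_add, integral_const_mul] at hsplit
  · linear_combination hsplit - (2 + p) / 2 * hfirst
  all_goals exact RapidDecay.integrable (by fun_prop (disch := simp)) volume

end Moments

section LinearizedOperator

variable (hjet : HasDilationJet w v v') (hweak : IsWeakLap w fun x => w x - w x ^ 3)
  {f : R2 → ℝ} (hf : ContDiff ℝ 2 f) (hfb : PolyBounded f) (hLf : PolyBounded (Lop w f))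

include hjet hweak

theorem isWeakLap_deriv : IsWeakLap v fun x => v x + 2 * w x - 3 * w x ^ 2 * v x := by
  obtain ⟨hw, hv, -, hwd, -⟩ := hjet
  have hxgrad := hweak.eulerDeriv hw (by fun_prop) (by fun_prop (disch := simp))
    (by fun_prop (disch := simp)) hwd (hwd.sub (hwd.pow 3))
  convert hxgrad.add hweak (by fun_prop) hw (by fun_prop (disch := simp))
    (by fun_prop (disch := simp)) using 2 with x x
  · ring
  · simp only [Nat.cast_ofNat, Nat.reduceSub]
    ring

theorem isWeakLap_deriv₂ : IsWeakLap v' fun x =>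
    v' x + 4 * v x + 2 * w x - 6 * w x * v x ^ 2 - 3 * w x ^ 2 * v' x := by
  have hweak_v := hjet.isWeakLap_deriv hweak
  obtain ⟨hw, hv, hv', hwd, hvd⟩ := hjet
  have hsource := (hvd.add (hwd.const_mul 2)).sub (((hwd.pow 2).const_mul 3).mul hvd)
  convert hweak_v.eulerDeriv hv hv' (by fun_prop) (by fun_prop) hvd hsource using 2 with x
  simp only [Nat.cast_ofNat, Nat.reduceSub]
  ring

include hf hfb hLf

theorem integral_deriv_mul_Lop : ∫ x, v x * Lop w f x = -2 * ∫ x, w x * f x := by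
  have hweak_v := hjet.isWeakLap_deriv hweak
  obtain ⟨hw, hv, -⟩ := hjet
  rw [hweak_v.integral_mul_Lop hv (by fun_prop) hw.polyBounded hf hfb hLf, ← integral_const_mul]
  congr with x
  ring

theorem integral_deriv₂_mul_Lop :
    ∫ x, v' x * Lop w f x = ∫ x, (6 * w x * v x ^ 2 - 4 * v x - 2 * w x) * f x := by
  have hweak_v' := hjet.isWeakLap_deriv₂ hweak
  obtain ⟨hw, hv, hv', -⟩ := hjet
  rw [hweak_v'.integral_mul_Lop hv' (by fun_prop) hw.polyBounded hf hfb hLf]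
  congr with x
  ring

/-- `∂ₜ² - ∂ₜ` at `t = 1` of the equation `-Δwₜ + t² wₜ - wₜ³ = 0` for the dilations
`wₜ = t w(t ·)`, tested against `f`. -/
theorem integral_sub_mul_Lop_add :
    ∫ x, ((v' x - v x) * Lop w f x + (4 * v x - 6 * w x * v x ^ 2) * f x) = 0 := by
  have hfirst := hjet.integral_deriv_mul_Lop hweak hf hfb hLf
  have hsecond := hjet.integral_deriv₂_mul_Lop hweak hf hfb hLf
  obtain ⟨hw, hv, hv', -⟩ := hjet
  have hsplit : ∫ x, ((v' x - v x) * Lop w f x + (4 * v x - 6 * w x * v x ^ 2) * f x) =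
      ∫ x, (v' x * Lop w f x - v x * Lop w f x -
        ((6 * w x * v x ^ 2 - 4 * v x - 2 * w x) * f x + 2 * (w x * f x))) := by
    congr with x
    ring
  rw [hsplit, integral_sub, integral_sub, integral_add, integral_const_mul, hfirst, hsecond]
  · ring
  all_goals exact RapidDecay.integrable (by fun_prop (disch := simp)) volume

end LinearizedOperator

theorem two_mul_integral_mul_sub_integral_deriv_mul {k d ψ₁ ψ₅ : R2 → ℝ} {a c p : ℝ}
    (hjet : HasDilationJet w v v') (hweak : IsWeakLap w fun x => w x - w x ^ 3)
    (hk : PolyBounded k) (hd : PolyBounded d)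
    (hkd : HasEulerDeriv k fun x => p * k x - d x) (hzero : ∫ x, w x ^ 2 * d x = 0)
    (hψ₁ : ContDiff ℝ 2 ψ₁) (hψ₁b : PolyBounded ψ₁)
    (hψ₁e : ∀ x, Lop w ψ₁ x = -a * w x ^ 3 - c * (k x * w x))
    (hψ₅ : ContDiff ℝ 2 ψ₅) (hψ₅b : PolyBounded ψ₅)
    (hψ₅e : ∀ x, Lop w ψ₅ x = ψ₁ x - 3 * w x * v x * ψ₁ x +
      1 / 2 * (3 * a * w x ^ 2 + c * k x) * v x - c / 2 * (w x * d x)) :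
    2 * (∫ x, w x * ψ₅ x) - ∫ x, v x * ψ₁ x =
      -((2 + p) / 2) * (c * (p / 2 * ∫ x, w x ^ 2 * k x)) := by
  have hw := hjet.rapidDecay
  have hv := hjet.rapidDecay_deriv
  have hv' := hjet.rapidDecay_deriv₂
  have hLψ₁ : PolyBounded (Lop w ψ₁) := funext hψ₁e ▸ by fun_prop
  have hLψ₅ : PolyBounded (Lop w ψ₅) := funext hψ₅e ▸ by fun_prop
  have hψ₁_sub := hjet.integral_sub_mul_Lop_add hweak hψ₁ hψ₁b hLψ₁
  have hψ₅_v := hjet.integral_deriv_mul_Lop hweak hψ₅ hψ₅b hLψ₅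
  simp only [hψ₁e] at hψ₁_sub
  have hpointwise : ∫ x, (v x * Lop w ψ₅ x + v x * ψ₁ x) =
      ∫ x, (1 / 2 * ((v' x - v x) * (-a * w x ^ 3 - c * (k x * w x)) +
          (4 * v x - 6 * w x * v x ^ 2) * ψ₁ x) +
        a / 2 * (3 * w x ^ 2 * v x ^ 2 - w x ^ 3 * v x + w x ^ 3 * v' x) +
        c / 2 * (v x ^ 2 * k x - w x * v x * k x + w x * v' x * k x - w x * v x * d x)) := by
    congr with x
    rw [hψ₅e]
    ring
  rw [integral_add, integral_add, integral_add, integral_const_mul, integral_const_mul,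
    integral_const_mul, hψ₁_sub, hjet.integral_quartic_second_variation,
    hjet.integral_potential_second_variation hk hd hkd hzero, hψ₅_v] at hpointwise
  · linear_combination -hpointwise
  all_goals exact RapidDecay.integrable (by fun_prop (disch := simp)) volume

end HasDilationJet

section RadialDecay

variable {u u' u'' : ℝ → ℝ} {κ R : ℝ}

theorem nonpos_of_le_deriv_add_mul {δ : ℝ} (hκ : 0 < κ) (hu : ∀ r, HasDerivAt u (u' r) r)
    (hlim : Tendsto u atTop (𝓝 0)) (hδ : ∀ r, R ≤ r → δ ≤ u' r + κ * u r) : δ ≤ 0 := by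
  have hV : ∀ r, HasDerivAt (fun r => exp (κ * r) * (u r - δ / κ))
      (exp (κ * r) * (u' r + κ * u r - δ)) r := fun r => by
    convert! ((hasDerivAt_id r).const_mul κ).exp.mul ((hu r).sub_const (δ / κ)) using 1
    simp only [id_eq]
    field_simp
    ring
  have hmono : MonotoneOn (fun r => exp (κ * r) * (u r - δ / κ)) (Ici R) :=
    monotoneOn_of_hasDerivWithinAt_nonneg (convex_Ici R)
      (fun r _ => (hV r).continuousAt.continuousWithinAt) (fun r _ => (hV r).hasDerivWithinAt)
      fun r hr => mul_nonneg (exp_pos _).le (sub_nonneg.2 (hδ r (interior_subset hr)))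
  have hexp : Tendsto (fun r => exp (κ * R) * (u R - δ / κ) * exp (-(κ * r))) atTop (𝓝 0) := by
    simpa using (tendsto_exp_neg_atTop_nhds_zero.comp
      (tendsto_id.const_mul_atTop hκ)).const_mul (exp (κ * R) * (u R - δ / κ))
  have hle : 0 ≤ 0 - δ / κ := by
    refine le_of_tendsto_of_tendsto hexp (hlim.sub_const _) ?_
    filter_upwards [eventually_ge_atTop R] with r hr
    rw [exp_neg, ← div_eq_mul_inv, div_le_iff₀' (exp_pos _)]
    exact hmono self_mem_Ici hr hr
  rwa [zero_sub, neg_nonneg, div_le_iff₀ hκ, zero_mul] at hle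

theorem monotoneOn_of_subsolution (hκ : 0 ≤ κ) (hR : 0 < R)
    (hu : ∀ r, HasDerivAt u (u' r) r) (hu' : ∀ r, HasDerivAt u' (u'' r) r)
    (hnonneg : ∀ r, R ≤ r → 0 ≤ u r) (hsub : ∀ r, R ≤ r → κ ^ 2 * u r ≤ u'' r + u' r / r) :
    MonotoneOn (fun r => r * exp (-(κ * r)) * (u' r + κ * u r)) (Ici R) := by
  have hd : ∀ r, HasDerivAt (fun r => r * exp (-(κ * r)) * (u' r + κ * u r))
      (exp (-(κ * r)) * (u' r + r * u'' r - κ ^ 2 * r * u r + κ * u r)) r := fun r => by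
    convert! ((hasDerivAt_id r).mul ((hasDerivAt_id r).const_mul κ).neg.exp).mul
      ((hu' r).add ((hu r).const_mul κ)) using 1
    simp only [id_eq, Pi.mul_apply, Pi.neg_apply, Pi.add_apply]
    ring
  refine monotoneOn_of_hasDerivWithinAt_nonneg (convex_Ici R)
    (fun r _ => (hd r).continuousAt.continuousWithinAt) (fun r _ => (hd r).hasDerivWithinAt)
    fun r hr => mul_nonneg (exp_pos _).le ?_
  have hRr : R ≤ r := interior_subset hr
  have hr0 : 0 < r := hR.trans_le hRr
  calc 0 ≤ r * (u'' r + u' r / r - κ ^ 2 * u r) + κ * u r :=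
        add_nonneg (mul_nonneg hr0.le (sub_nonneg.2 (hsub r hRr))) (mul_nonneg hκ (hnonneg r hRr))
    _ = u' r + r * u'' r - κ ^ 2 * r * u r + κ * u r := by field_simp; ring

/-- Otherwise `u' + κ u` would stay above a positive constant, contradicting `u → 0`. -/
theorem deriv_add_mul_nonpos_of_subsolution (hκ : 0 < κ) (hR : 0 < R)
    (hu : ∀ r, HasDerivAt u (u' r) r) (hu' : ∀ r, HasDerivAt u' (u'' r) r)
    (hlim : Tendsto u atTop (𝓝 0)) (hnonneg : ∀ r, R ≤ r → 0 ≤ u r)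
    (hsub : ∀ r, R ≤ r → κ ^ 2 * u r ≤ u'' r + u' r / r) {r₀ : ℝ} (hr₀ : R ≤ r₀) :
    u' r₀ + κ * u r₀ ≤ 0 := by
  have hmono := monotoneOn_of_subsolution hκ.le hR hu hu' hnonneg hsub
  by_contra! hpos
  have hr₀_pos : 0 < r₀ := hR.trans_le hr₀
  refine (nonpos_of_le_deriv_add_mul (R := r₀)
    (δ := κ * (r₀ * exp (-(κ * r₀)) * (u' r₀ + κ * u r₀))) hκ hu hlim fun r hr => ?_).not_gt
    (by positivity)
  have hle : r₀ * exp (-(κ * r₀)) * (u' r₀ + κ * u r₀) ≤ r * exp (-(κ * r)) * (u' r + κ * u r) :=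
    hmono hr₀ (hr₀.trans hr) hr
  have hweight : 0 < r * exp (-(κ * r)) := mul_pos (hr₀_pos.trans_le hr) (exp_pos _)
  have hpos_r : 0 < u' r + κ * u r :=
    pos_of_mul_pos_right (hle.trans_lt' (by positivity)) hweight.le
  have hexp : κ * (r * exp (-(κ * r))) ≤ 1 := by
    rw [← mul_assoc, exp_neg, ← div_eq_mul_inv, div_le_one (exp_pos _)]
    linarith [add_one_le_exp (κ * r)]
  calc κ * (r₀ * exp (-(κ * r₀)) * (u' r₀ + κ * u r₀))
      ≤ κ * (r * exp (-(κ * r))) * (u' r + κ * u r) := by rw [mul_assoc κ]; gcongr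
    _ ≤ u' r + κ * u r := mul_le_of_le_one_left hpos_r.le hexp

theorem isBigO_exp_neg_of_deriv_add_mul_nonpos (hu : ∀ r, HasDerivAt u (u' r) r)
    (hnonneg : ∀ r, R ≤ r → 0 ≤ u r) (hle : ∀ r, R ≤ r → u' r + κ * u r ≤ 0) :
    u =O[atTop] fun r => exp (-(κ * r)) := by
  have hd : ∀ r, HasDerivAt (fun r => exp (κ * r) * u r) (exp (κ * r) * (u' r + κ * u r)) r :=
    fun r => by
      convert! ((hasDerivAt_id r).const_mul κ).exp.mul (hu r) using 1
      simp only [id_eq]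
      ring
  have hanti : AntitoneOn (fun r => exp (κ * r) * u r) (Ici R) :=
    antitoneOn_of_hasDerivWithinAt_nonpos (convex_Ici R)
      (fun r _ => (hd r).continuousAt.continuousWithinAt) (fun r _ => (hd r).hasDerivWithinAt)
      fun r hr => mul_nonpos_of_nonneg_of_nonpos (exp_pos _).le (hle r (interior_subset hr))
  refine .of_bound (exp (κ * R) * u R) ?_
  filter_upwards [eventually_ge_atTop R] with r hr
  rw [norm_of_nonneg (hnonneg r hr), norm_of_nonneg (exp_pos _).le, exp_neg, ← div_eq_mul_inv,
    le_div_iff₀' (exp_pos _)]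
  exact hanti self_mem_Ici hr hr

theorem abs_deriv_le_of_convex_of_antitone (hu : ∀ r, HasDerivAt u (u' r) r)
    (hu' : ∀ r, HasDerivAt u' (u'' r) r) (hnonneg : ∀ r, R ≤ r → 0 ≤ u r)
    (hanti : ∀ r, R ≤ r → u' r ≤ 0) (hconvex : ∀ r, R ≤ r → 0 ≤ u'' r) {r : ℝ} (hr : R + 1 ≤ r) :
    |u' r| ≤ u (r - 1) := by
  have hmono : MonotoneOn u' (Ici R) := monotoneOn_of_hasDerivWithinAt_nonneg (convex_Ici R)
    (fun r _ => (hu' r).continuousAt.continuousWithinAt) (fun r _ => (hu' r).hasDerivWithinAt)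
    fun r hr => hconvex r (interior_subset hr)
  obtain ⟨s, ⟨hs, hsr⟩, hslope⟩ := exists_hasDerivAt_eq_slope u u' (sub_one_lt r)
    (fun x _ => (hu x).continuousAt.continuousWithinAt) fun x _ => hu x
  have hle : u' s ≤ u' r := hmono (by simp; linarith) (by simp; linarith) hsr.le
  rw [sub_sub_cancel, div_one] at hslope
  rw [abs_of_nonpos (hanti r (by linarith))]
  linarith [hnonneg r (by linarith)]

theorem isBigO_exp_neg_of_subsolution (hκ : 0 < κ) (hR : 0 < R)
    (hu : ∀ r, HasDerivAt u (u' r) r) (hu' : ∀ r, HasDerivAt u' (u'' r) r)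
    (hlim : Tendsto u atTop (𝓝 0)) (hnonneg : ∀ r, R ≤ r → 0 ≤ u r)
    (hsub : ∀ r, R ≤ r → κ ^ 2 * u r ≤ u'' r + u' r / r) :
    (u =O[atTop] fun r => exp (-(κ * r))) ∧ u' =O[atTop] fun r => exp (-(κ * r)) := by
  have hle : ∀ r, R ≤ r → u' r + κ * u r ≤ 0 := fun r =>
    deriv_add_mul_nonpos_of_subsolution hκ hR hu hu' hlim hnonneg hsub
  have hO := isBigO_exp_neg_of_deriv_add_mul_nonpos hu hnonneg hle
  have hanti : ∀ r, R ≤ r → u' r ≤ 0 := fun r hr => by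
    linarith [hle r hr, mul_nonneg hκ.le (hnonneg r hr)]
  have hconvex : ∀ r, R ≤ r → 0 ≤ u'' r := fun r hr => by
    linarith [hsub r hr, mul_nonneg (sq_nonneg κ) (hnonneg r hr),
      div_nonpos_of_nonpos_of_nonneg (hanti r hr) (hR.trans_le hr).le]
  refine ⟨hO, ?_⟩
  have hshift : u' =O[atTop] fun r => u (r - 1) := .of_bound' <| by
    filter_upwards [eventually_ge_atTop (R + 1)] with r hr
    rw [norm_of_nonneg (hnonneg (r - 1) (by linarith)), norm_eq_abs]
    exact abs_deriv_le_of_convex_of_antitone hu hu' hnonneg hanti hconvex hr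
  refine (hshift.trans (hO.comp_tendsto (tendsto_atTop_add_const_right _ (-1) tendsto_id))).trans ?_
  refine .of_bound (exp κ) (.of_forall fun r => ?_)
  simp only [Function.comp_apply, norm_of_nonneg (exp_pos _).le, ← exp_add]
  exact exp_le_exp.2 (by linarith)

theorem rapidDecay_comp_norm {E : Type*} [NormedAddCommGroup E] (hκ : 0 < κ) (hu : Continuous u)
    (hO : u =O[atTop] fun r => exp (-(κ * r))) : RapidDecay fun x : E => u ‖x‖ := by
  refine ⟨hu.comp continuous_norm, fun k => ?_⟩
  have hlim : Tendsto (fun r => exp κ * ((r + 1) ^ k / exp (κ * (r + 1)))) atTop (𝓝 0) := by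
    simpa using ((isLittleO_pow_exp_pos_mul_atTop k hκ).tendsto_div_nhds_zero.comp
      (tendsto_atTop_add_const_right _ 1 tendsto_id)).const_mul (exp κ)
  have hbdd : (fun r => (1 + r) ^ k * |u r|) =O[atTop] fun _ => (1 : ℝ) := by
    refine (((Asymptotics.isBigO_refl (fun r : ℝ => (1 + r) ^ k) atTop).mul hO.abs_left).congr_right
      fun r => ?_).trans (hlim.isBigO_one ℝ)
    rw [mul_add, exp_add, exp_neg]
    field_simp
    ring
  obtain ⟨C, hC⟩ := hbdd.bound
  obtain ⟨R, hR⟩ := eventually_atTop.1 hC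
  obtain ⟨M, hM⟩ := (isCompact_Icc (a := (0 : ℝ)) (b := R)).exists_bound_of_continuousOn
    (f := fun r => (1 + r) ^ k * |u r|) (by fun_prop)
  refine ⟨max M C, fun x => ?_⟩
  rcases le_total ‖x‖ R with hx | hx
  · exact (le_abs_self _).trans ((hM ‖x‖ ⟨norm_nonneg x, hx⟩).trans (le_max_left _ _))
  · exact (le_abs_self _).trans (((hR ‖x‖ hx).trans (by simp)).trans (le_max_right _ _))

end RadialDecay

section RadialIntegrability

variable {E : Type*} [NormedAddCommGroup E] [NormedSpace ℝ E] [FiniteDimensional ℝ E]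
  [Nontrivial E] [MeasurableSpace E] [BorelSpace E] (μ : Measure E) [μ.IsAddHaarMeasure]

theorem integrableOn_Ioi_one_of_integrable_comp_norm {g : ℝ → ℝ} (hg : Continuous g)
    (hintegrable : Integrable (fun x => g ‖x‖) μ) : IntegrableOn g (Ioi 1) := by
  have hpolar : IntegrableOn (fun r => r ^ (Module.finrank ℝ E - 1) • g r) (Ioi 1) :=
    ((integrable_fun_norm_addHaar μ).1 hintegrable).mono_set (Ioi_subset_Ioi zero_le_one)
  refine Integrable.mono hpolar hg.aestronglyMeasurable
    ((ae_restrict_iff' measurableSet_Ioi).2 (.of_forall fun r (hr : 1 < r) => ?_))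
  have hweight : 1 ≤ r ^ (Module.finrank ℝ E - 1) := one_le_pow₀ hr.le
  rw [norm_smul, norm_of_nonneg (zero_le_one.trans hweight)]
  exact le_mul_of_one_le_left (norm_nonneg _) hweight

theorem tendsto_zero_of_integrable_sq_comp_norm {u u' : ℝ → ℝ} (hu : ∀ r, HasDerivAt u (u' r) r)
    (hu' : Continuous u') (hintegrable : Integrable (fun x => u ‖x‖ ^ 2) μ)
    (hintegrable' : Integrable (fun x => u' ‖x‖ ^ 2) μ) : Tendsto u atTop (𝓝 0) := by
  have hcont : Continuous u := continuous_iff_continuousAt.2 fun r => (hu r).continuousAt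
  have hsq := integrableOn_Ioi_one_of_integrable_comp_norm (g := fun r => u r ^ 2) μ
    (hcont.pow 2) hintegrable
  have hsq' := integrableOn_Ioi_one_of_integrable_comp_norm (g := fun r => u' r ^ 2) μ
    (hu'.pow 2) hintegrable'
  have hcross : IntegrableOn (fun r => 2 * u r * u' r) (Ioi 1) :=
    (hsq.add hsq').mono' (by fun_prop) (.of_forall fun r => by
      simpa [abs_mul] using two_mul_le_add_sq |u r| |u' r|)
  have hlim : Tendsto (fun r => u r ^ 2) atTop (𝓝 0) :=
    tendsto_zero_of_hasDerivAt_of_integrableOn_Ioi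
      (fun r _ => by simpa using (hu r).fun_pow 2) hcross hsq
  exact squeeze_zero_norm (fun r => (sqrt_sq_eq_abs (u r)).ge) (by simpa using hlim.sqrt)

end RadialIntegrability

theorem hasFDerivAt_norm_of_ne_zero {E : Type*} [NormedAddCommGroup E] [InnerProductSpace ℝ E]
    {x : E} (hx : x ≠ 0) : HasFDerivAt (fun y : E => ‖y‖) (‖x‖⁻¹ • innerSL ℝ x) x := by
  have hsqrt := (hasStrictFDerivAt_norm_sq x).hasFDerivAt.sqrt
    (pow_ne_zero 2 (norm_ne_zero_iff.2 hx))
  simp only [sqrt_sq (norm_nonneg _)] at hsqrt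
  convert! hsqrt using 1
  ext v
  simp only [smul_apply, coe_innerSL_apply, smul_eq_mul, one_div, mul_inv_rev, nsmul_eq_mul,
    Nat.cast_ofNat]
  field_simp

theorem lap_of_fderiv_eq_mul_inner {f G : R2 → ℝ} {G' : R2 →L[ℝ] ℝ} {x : R2}
    (hG : HasFDerivAt G G' x) (hf : ∀ᶠ y in 𝓝 x, ∀ v, fderiv ℝ f y v = G y * ⟪y, v⟫) :
    lap f x = 2 * G x + G' x := by
  have hpartial : ∀ v : R2, fderiv ℝ (fun y => fderiv ℝ f y v) x v =
      G x * ‖v‖ ^ 2 + ⟪x, v⟫ * G' v := fun v => by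
    have hinner : HasFDerivAt (fun y : R2 => ⟪y, v⟫) (innerSL ℝ v) x :=
      (innerSL ℝ v).hasFDerivAt.congr_of_eventuallyEq (.of_forall fun y => real_inner_comm v y)
    have heq : (fun y => fderiv ℝ f y v) =ᶠ[𝓝 x] fun y => G y * ⟪y, v⟫ := hf.mono fun y hy => hy v
    rw [heq.fderiv_eq, (hG.fun_mul hinner).fderiv]
    simp
  have hG'x : G' x =
      x 0 * G' (EuclideanSpace.single 0 1) + x 1 * G' (EuclideanSpace.single 1 1) := by
    have hx : x = x 0 • EuclideanSpace.single 0 1 + x 1 • EuclideanSpace.single 1 1 := by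
      ext i; fin_cases i <;> simp
    conv_lhs => rw [hx, map_add, map_smul, map_smul, smul_eq_mul, smul_eq_mul]
  rw [lap, Fin.sum_univ_two, hpartial, hpartial, hG'x]
  simp only [PiLp.norm_single, norm_one, one_pow, mul_one, EuclideanSpace.inner_single_right,
    ringHom_apply, one_mul]
  ring

theorem xgrad_eq_fderiv (f : R2 → ℝ) (x : R2) : xgrad f x = fderiv ℝ f x x := by
  rw [xgrad, inner_gradient_right, conj_trivial]

/-- The profile of a radial function, read off along the first coordinate axis. -/
def radialProfile (f : R2 → ℝ) (r : ℝ) : ℝ := f (r • EuclideanSpace.single 0 1)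

section Radial

variable {f : R2 → ℝ}

theorem contDiff_radialProfile {n : WithTop ℕ∞} (hf : ContDiff ℝ n f) :
    ContDiff ℝ n (radialProfile f) := hf.comp (contDiff_id.smul contDiff_const)

theorem hasDerivAt_radialProfile (hf : ContDiff ℝ 2 f) (r : ℝ) :
    HasDerivAt (radialProfile f) (deriv (radialProfile f) r) r :=
  ((contDiff_radialProfile hf).differentiable two_ne_zero r).hasDerivAt

theorem hasDerivAt_deriv_radialProfile (hf : ContDiff ℝ 2 f) (r : ℝ) :
    HasDerivAt (deriv (radialProfile f)) (deriv (deriv (radialProfile f)) r) r :=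
  ((contDiff_radialProfile hf).differentiable_deriv_two r).hasDerivAt

variable (hrad : ∀ x y : R2, ‖x‖ = ‖y‖ → f x = f y)

include hrad

theorem radialProfile_norm (x : R2) : radialProfile f ‖x‖ = f x :=
  hrad _ _ (by simp [norm_smul])

theorem fderiv_apply_of_radial (hf : ContDiff ℝ 2 f) {x : R2} (hx : x ≠ 0) (v : R2) :
    fderiv ℝ f x v = deriv (radialProfile f) ‖x‖ / ‖x‖ * ⟪x, v⟫ := by
  have hcomp := (hasDerivAt_radialProfile hf ‖x‖).comp_hasFDerivAt x
    (hasFDerivAt_norm_of_ne_zero hx)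
  rw [show radialProfile f ∘ norm = f from funext (radialProfile_norm hrad)] at hcomp
  rw [hcomp.fderiv]
  simp [div_eq_mul_inv, mul_assoc]

theorem lap_of_radial (hf : ContDiff ℝ 2 f) {x : R2} (hx : x ≠ 0) :
    lap f x = deriv (deriv (radialProfile f)) ‖x‖ + deriv (radialProfile f) ‖x‖ / ‖x‖ := by
  have hG := ((hasDerivAt_deriv_radialProfile hf ‖x‖).div (hasDerivAt_id ‖x‖)
    (norm_ne_zero_iff.2 hx)).comp_hasFDerivAt x (hasFDerivAt_norm_of_ne_zero hx)
  rw [lap_of_fderiv_eq_mul_inner hG ((eventually_ne_nhds hx).mono fun y hy =>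
    fderiv_apply_of_radial hrad hf hy)]
  have hx' : ‖x‖ ≠ 0 := norm_ne_zero_iff.2 hx
  simp only [Function.comp_apply, Pi.div_apply, id_eq, mul_one, smul_apply, coe_innerSL_apply,
    real_inner_self_eq_norm_sq, smul_eq_mul]
  field_simp
  ring

theorem abs_fderiv_apply_le_of_radial (hf : ContDiff ℝ 2 f) (x v : R2) :
    |fderiv ℝ f x v| ≤ |deriv (radialProfile f) ‖x‖| * ‖v‖ := by
  have hne : ∀ y ∈ ({0}ᶜ : Set R2), |fderiv ℝ f y v| ≤ |deriv (radialProfile f) ‖y‖| * ‖v‖ :=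
    fun y hy => by
      rw [fderiv_apply_of_radial hrad hf hy, abs_mul, abs_div, abs_norm, div_mul_eq_mul_div,
        div_le_iff₀ (norm_pos_iff.2 hy), mul_assoc, mul_comm ‖v‖]
      gcongr
      exact abs_real_inner_le_norm y v
  have hcont := hf.continuous_fderiv two_ne_zero
  have hcont' := (contDiff_radialProfile hf).continuous_deriv one_le_two
  exact le_on_closure hne (by fun_prop) (by fun_prop) (dense_compl_singleton 0 x)

theorem xgrad_of_radial (hf : ContDiff ℝ 2 f) (x : R2) :
    xgrad f x = ‖x‖ * deriv (radialProfile f) ‖x‖ := by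
  rcases eq_or_ne x 0 with rfl | hx
  · simp [xgrad]
  · rw [xgrad_eq_fderiv, fderiv_apply_of_radial hrad hf hx, real_inner_self_eq_norm_sq]
    field_simp

theorem hasEulerDeriv_xgrad_of_radial (hf : ContDiff ℝ 2 f) :
    HasEulerDeriv (xgrad f) fun x => ‖x‖ ^ 2 * lap f x := fun x => by
  rcases eq_or_ne x 0 with rfl | hx
  · simpa using hasDerivAt_const (1 : ℝ) (xgrad f 0)
  have hscale : HasDerivAt (fun t : ℝ => t * ‖x‖) ‖x‖ 1 := hasDerivAt_mul_const _
  have hd := hscale.fun_mul (HasDerivAt.comp (1 : ℝ) (h := fun t => t * ‖x‖)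
    (hasDerivAt_deriv_radialProfile hf _) hscale)
  have heq : (fun t : ℝ => xgrad f (t • x)) =ᶠ[𝓝 1]
      fun t => t * ‖x‖ * deriv (radialProfile f) (t * ‖x‖) := by
    filter_upwards [eventually_gt_nhds one_pos] with t ht
    rw [xgrad_of_radial hrad hf, norm_smul, norm_of_nonneg ht.le]
  refine (hd.congr_of_eventuallyEq heq).congr_deriv ?_
  simp only [lap_of_radial hrad hf hx, Function.comp_apply, one_mul]
  field_simp [norm_ne_zero_iff.2 hx]
  ring

end Radial

namespace IsGroundState

variable {w : R2 → ℝ} (hw : IsGroundState w)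

include hw

theorem lap_eq (x : R2) : lap w x = w x - w x ^ 3 := by
  linarith [hw.eqn x]

theorem radialProfile_pos (r : ℝ) : 0 < radialProfile w r := hw.pos _

theorem radialProfile_ode {r : ℝ} (hr : 0 < r) :
    deriv (deriv (radialProfile w)) r + deriv (radialProfile w) r / r =
      radialProfile w r - radialProfile w r ^ 3 := by
  have hnorm : ‖r • (EuclideanSpace.single 0 1 : R2)‖ = r := by simp [norm_smul, hr.le]
  have hne : r • (EuclideanSpace.single 0 1 : R2) ≠ 0 := norm_pos_iff.1 (hnorm.symm ▸ hr)
  have hlap := lap_of_radial hw.radial hw.smooth hne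
  rwa [hnorm, hw.lap_eq, eq_comm] at hlap

theorem tendsto_radialProfile : Tendsto (radialProfile w) atTop (𝓝 0) := by
  have hcont' := (contDiff_radialProfile hw.smooth).continuous_deriv one_le_two
  refine tendsto_zero_of_integrable_sq_comp_norm (volume : Measure R2)
    (hasDerivAt_radialProfile hw.smooth) hcont' ?_ ?_
  · simpa only [radialProfile_norm hw.radial] using hw.sqInt
  refine hw.gradSqInt.mono' (by fun_prop) ?_
  filter_upwards [Measure.ae_ne volume (0 : R2)] with x hx
  rw [norm_pow]
  gcongr
  refine le_of_mul_le_mul_left ?_ (norm_pos_iff.2 hx)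
  have hxgrad : ‖x‖ * ‖deriv (radialProfile w) ‖x‖‖ = ‖xgrad w x‖ := by
    rw [xgrad_of_radial hw.radial hw.smooth, norm_mul, norm_norm]
  rw [hxgrad]
  exact abs_real_inner_le_norm _ _

theorem radialProfile_isBigO :
    (radialProfile w =O[atTop] fun r => exp (-(1 / 2 * r))) ∧
      deriv (radialProfile w) =O[atTop] fun r => exp (-(1 / 2 * r)) := by
  obtain ⟨R, hR⟩ := eventually_atTop.1
    ((hw.tendsto_radialProfile.eventually_le_const one_half_pos).and (eventually_gt_atTop 0))
  refine isBigO_exp_neg_of_subsolution one_half_pos (hR R le_rfl).2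
    (hasDerivAt_radialProfile hw.smooth) (hasDerivAt_deriv_radialProfile hw.smooth)
    hw.tendsto_radialProfile (fun r _ => (hw.radialProfile_pos r).le) fun r hr => ?_
  obtain ⟨hsmall, hr0⟩ := hR r hr
  rw [hw.radialProfile_ode hr0]
  have hpos := hw.radialProfile_pos r
  have hsq : radialProfile w r ^ 2 ≤ (1 / 2) ^ 2 := by gcongr
  nlinarith [mul_le_mul_of_nonneg_left hsq hpos.le]

theorem rapidDecay : RapidDecay w := by
  simpa only [radialProfile_norm hw.radial] using rapidDecay_comp_norm (E := R2) one_half_pos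
    (contDiff_radialProfile hw.smooth).continuous hw.radialProfile_isBigO.1

theorem rapidDecay_deriv_radialProfile_norm :
    RapidDecay fun x : R2 => deriv (radialProfile w) ‖x‖ :=
  rapidDecay_comp_norm one_half_pos
    ((contDiff_radialProfile hw.smooth).continuous_deriv one_le_two) hw.radialProfile_isBigO.2

theorem rapidDecay_fderiv_apply (v : R2) : RapidDecay fun x => fderiv ℝ w x v := by
  have hprofile := hw.rapidDecay_deriv_radialProfile_norm
  have hcont := hw.smooth.continuous_fderiv two_ne_zero
  refine (show RapidDecay fun x : R2 => deriv (radialProfile w) ‖x‖ * ‖v‖ by fun_prop).of_abs_le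
    (by fun_prop) fun x => ?_
  rw [abs_mul, abs_norm]
  exact abs_fderiv_apply_le_of_radial hw.radial hw.smooth x v

theorem rapidDecay_xgrad : RapidDecay (xgrad w) := by
  have hprofile := hw.rapidDecay_deriv_radialProfile_norm
  rw [funext (xgrad_of_radial hw.radial hw.smooth)]
  fun_prop

theorem isWeakLap : IsWeakLap w fun x => w x - w x ^ 3 := by
  have hdecay := hw.rapidDecay
  rw [← funext hw.lap_eq]
  refine isWeakLap_lap hw.smooth hdecay (fun i => hw.rapidDecay_fderiv_apply _) ?_
  rw [funext hw.lap_eq]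
  fun_prop (disch := simp)

theorem hasEulerDeriv : HasEulerDeriv w (xgrad w) := by
  rw [funext (xgrad_eq_fderiv w)]
  exact hasEulerDeriv_of_differentiable (hw.smooth.differentiable two_ne_zero)

theorem hasDilationJet : HasDilationJet w (fun x => w x + xgrad w x)
    fun x => xgrad w x + ‖x‖ ^ 2 * (w x - w x ^ 3) := by
  have hdecay := hw.rapidDecay
  have hdecay_xgrad := hw.rapidDecay_xgrad
  refine ⟨hdecay, by fun_prop, by fun_prop (disch := simp), ?_, ?_⟩
  · simpa only [add_sub_cancel_left] using hw.hasEulerDeriv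
  · simpa only [hw.lap_eq] using
      hw.hasEulerDeriv.add (hasEulerDeriv_xgrad_of_radial hw.radial hw.smooth)

end IsGroundState

theorem BddFun.polyBounded {f : R2 → ℝ} (hf : BddFun f) (hcont : Continuous f) :
    PolyBounded f :=
  ⟨hcont, hf.imp fun M hM => ⟨0, by simpa using hM⟩⟩

theorem identity_II_general {w h ψ1 ψ2 ψ5 : R2 → ℝ} {p a c : ℝ} {y0 : R2}
    (hw : IsGroundState w) (hsmooth : ContDiff ℝ 1 h) (hhom : Homog h p)
    (hcrit : gradient (Hfun h w) y0 = 0)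
    (hψ1s : ContDiff ℝ 2 ψ1) (hψ1b : PolyBounded ψ1)
    (hψ1e : ∀ x, Lop w ψ1 x = -a * w x ^ 3 - c * (h (x + y0) * w x))
    (hψ2 : ∀ x, ψ2 x = -(1 / 2) * (w x + xgrad w x))
    (hψ5s : ContDiff ℝ 2 ψ5) (hψ5b : PolyBounded ψ5)
    (hψ5e : ∀ x, Lop w ψ5 x = 6 * w x * ψ1 x * ψ2 x + ψ1 x
      - (3 * a * w x ^ 2 + c * h (x + y0)) * ψ2 x
      - c / 2 * (w x * ⟪y0, gradient h (x + y0)⟫)) :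
    2 * (∫ x, w x * ψ5 x) + 2 * (∫ x, ψ1 x * ψ2 x) =
      -((2 + p) / 2) * (c * (p / 2 * Hfun h w y0)) := by
  have hψ5e' : ∀ x, Lop w ψ5 x = ψ1 x - 3 * w x * (w x + xgrad w x) * ψ1 x
      + 1 / 2 * (3 * a * w x ^ 2 + c * h (x + y0)) * (w x + xgrad w x)
      - c / 2 * (w x * fderiv ℝ h (x + y0) y0) := fun x => by
    rw [hψ5e, hψ2, inner_gradient_right, conj_trivial]
    ring
  have hdilation := hw.hasDilationJet.two_mul_integral_mul_sub_integral_deriv_mul hw.isWeakLap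
    ((hhom.polyBounded hsmooth.continuous).comp_add_right y0)
    (((hhom.polyBounded_fderiv hsmooth).comp_add_right y0).clm_apply y0)
    (hhom.hasEulerDeriv_comp_add_right (hsmooth.differentiable one_ne_zero) y0)
    (integral_sq_mul_fderiv_eq_zero_of_gradient_Hfun_eq_zero hsmooth hhom hw.rapidDecay hcrit y0)
    hψ1s hψ1b hψ1e hψ5s hψ5b hψ5e'
  have hψ12 : 2 * (∫ x, ψ1 x * ψ2 x) = -∫ x, (w x + xgrad w x) * ψ1 x := by
    rw [← integral_const_mul, ← integral_neg]
    exact integral_congr_ae (.of_forall fun x => by simp only [hψ2]; ring)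
  rw [hψ12, ← sub_eq_add_neg, hdilation]
  simp only [Hfun, mul_comm]

/-- Lemma 3.3, identity `II`: `2∫ wψ₅ + 2∫ ψ₁ψ₂ = -(2+p)/2`. -/
theorem identity_II
    (w h : R2 → ℝ) (p : ℝ) (y0 : R2)
    (hw : IsGroundState w) (hp : 2 ≤ p)
    (hsmooth : ContDiff ℝ 2 h)
    (hnonneg : ∀ x, 0 ≤ h x) (hhom : Homog h p)
    (hcrit : gradient (Hfun h w) y0 = 0)
    (huniq : ∀ y, gradient (Hfun h w) y = 0 → y = y0)
    (astar lam : ℝ) (hastar : astar = ∫ x, (w x) ^ 2)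
    (hlam : lam = (p / 2 * Hfun h w y0) ^ ((1:ℝ) / (2 + p)))
    -- `ψ₁`: the unique bounded solution of `∇ψ₁(0)=0`, `Lψ₁ = -w³/a* - h(·+y₀)w/λ^{2+p}`
    (ψ1 : R2 → ℝ)
    (hψ1s : ContDiff ℝ 2 ψ1) (hψ1b : BddFun ψ1) (hψ1g : gradient ψ1 0 = 0)
    (hψ1e : ∀ x, Lop w ψ1 x =
      -((w x) ^ 3) / astar - h (x + y0) * w x / lam ^ ((2:ℝ) + p))
    -- `ψ₂ = -(1/2)(w + x·∇w)`
    (ψ2 : R2 → ℝ) (hψ2 : ∀ x, ψ2 x = -(1 / 2) * (w x + xgrad w x))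
    -- `ψ₅`: the unique bounded solution of `∇ψ₅(0)=0` and (3.20) for `i = 5`
    (ψ5 : R2 → ℝ)
    (hψ5s : ContDiff ℝ 2 ψ5) (hψ5b : BddFun ψ5) (hψ5g : gradient ψ5 0 = 0)
    (hψ5e : ∀ x, Lop w ψ5 x =
      6 * w x * ψ1 x * ψ2 x + ψ1 x
        - (3 * (w x) ^ 2 / astar + h (x + y0) / lam ^ ((2:ℝ) + p)) * ψ2 x
        - (w x / (2 * lam ^ ((2:ℝ) + p))) * ⟪y0, gradient h (x + y0)⟫)
    (hint1 : Integrable fun x => w x * ψ5 x)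
    (hint2 : Integrable fun x => ψ1 x * ψ2 x) :
    2 * (∫ x, w x * ψ5 x) + 2 * (∫ x, ψ1 x * ψ2 x) = -(2 + p) / 2 := by
  have hH : 0 < p / 2 * Hfun h w y0 := mul_pos (by linarith) <|
    Hfun_pos (hhom.polyBounded hsmooth.continuous) hnonneg hw.rapidDecay hw.pos huniq
  have hlam_rpow : lam ^ (2 + p) = p / 2 * Hfun h w y0 := by
    rw [hlam, ← rpow_mul hH.le, one_div_mul_cancel (by linarith), rpow_one]
  rw [hlam_rpow] at hψ1e hψ5e
  have hidentity := identity_II_general (a := astar⁻¹) (c := (p / 2 * Hfun h w y0)⁻¹) hw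
    (hsmooth.of_le one_le_two) hhom hcrit hψ1s (hψ1b.polyBounded hψ1s.continuous)
    (fun x => (hψ1e x).trans (by ring)) hψ2 hψ5s (hψ5b.polyBounded hψ5s.continuous)
    (fun x => (hψ5e x).trans (by ring))
  rw [hidentity, inv_mul_cancel₀ hH.ne']
  ring
end
end

section
/- Let w be the unique radial positive solution of Δw − w + w³ = 0 in ℝ² with w ∈ H¹(ℝ²). Then the function ψ₂(x) := −(1/2)(w(x) + x·∇w(x)) satisfies −Δψ₂ + (1 − 3w²)ψ₂ = w in ℝ² and ∇ψ₂(0) = 0; moreover, ψ₂ is the unique solution of this problem in C²(ℝ²)∩L^∞(ℝ²). -/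
noncomputable section
open MeasureTheory Filter Real Set
open scoped RealInnerProductSpace Topology

/-!
Write `E f = x · ∇f`. Since `Δ (E f) = 2 Δf + E (Δf)`, differentiating `Δw = w - w³` along
dilations gives `L (w + E w) = -2 w`, and `w + E w` is radial, so its gradient vanishes at `0`.

Boundedness is read off the radial profile `g` of `w`, which solves `r g'' + g' = r (g - g³)`. As
`w ∈ H¹`, the function `r g²` and its derivative are integrable at infinity, whence `g → 0`; from
then on `r g'` is increasing, and nonpositive because `g` is positive and tends to `0`, so it is
bounded.

For uniqueness, two solutions differ by a derivative `∂ᵥw`, whose gradient at `0` is `D²w(0) v`.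
By radial symmetry `D²w(0) = (Δw(0) / 2) I`, and the decreasing energy `g'²/2 - g²/2 + g⁴/4` tends
to `0`, which forces `w(0)² ≥ 2`. Hence `Δw(0) = w(0) - w(0)³ ≠ 0` and `v = 0`.
-/

open scoped Laplacian

section DirectionalDerivative

variable {E : Type*} [NormedAddCommGroup E] [NormedSpace ℝ E] {f : E → ℝ}

/-- The derivative of `f` in the direction `v`, with the point as last argument so that
directional derivatives can be iterated. -/
def dirDeriv (v : E) (f : E → ℝ) (x : E) : ℝ := fderiv ℝ f x v

/-- The Euler derivative `x · ∇f`, the generator of the dilations `f ↦ f (t • ·)`. -/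
def eulerDeriv (f : E → ℝ) (x : E) : ℝ := fderiv ℝ f x x

theorem contDiff_dirDeriv {n : WithTop ℕ∞} (hf : ContDiff ℝ (n + 1) f) (v : E) :
    ContDiff ℝ n (dirDeriv v f) :=
  (hf.fderiv_right le_rfl).clm_apply contDiff_const

theorem contDiff_eulerDeriv {n : WithTop ℕ∞} (hf : ContDiff ℝ (n + 1) f) :
    ContDiff ℝ n (eulerDeriv f) :=
  (hf.fderiv_right le_rfl).clm_apply contDiff_id

theorem differentiable_fderiv (hf : ContDiff ℝ 2 f) : Differentiable ℝ (fderiv ℝ f) :=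
  (hf.fderiv_right (m := 1) (by norm_num)).differentiable one_ne_zero

theorem dirDeriv_dirDeriv (hf : ContDiff ℝ 2 f) (u v x : E) :
    dirDeriv u (dirDeriv v f) x = fderiv ℝ (fderiv ℝ f) x u v := by
  unfold dirDeriv
  rw [fderiv_clm_apply (differentiable_fderiv hf x) (differentiableAt_const v)]
  simp

theorem dirDeriv_eulerDeriv (hf : ContDiff ℝ 2 f) (v x : E) :
    dirDeriv v (eulerDeriv f) x = dirDeriv v f x + eulerDeriv (dirDeriv v f) x := by
  have symm : fderiv ℝ (fderiv ℝ f) x v x = fderiv ℝ (fderiv ℝ f) x x v :=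
    (hf.contDiffAt.isSymmSndFDerivAt (by simp)) v x
  change fderiv ℝ (fun y ↦ fderiv ℝ f y y) x v = fderiv ℝ f x v + dirDeriv x (dirDeriv v f) x
  rw [fderiv_clm_apply (differentiable_fderiv hf x) differentiableAt_fun_id,
    dirDeriv_dirDeriv hf, ← symm]
  simp

theorem dirDeriv_dirDeriv_eulerDeriv (hf : ContDiff ℝ 3 f) (v x : E) :
    dirDeriv v (dirDeriv v (eulerDeriv f)) x =
      2 * dirDeriv v (dirDeriv v f) x + eulerDeriv (dirDeriv v (dirDeriv v f)) x := by
  have hv : ContDiff ℝ 2 (dirDeriv v f) := contDiff_dirDeriv hf v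
  have first_order : dirDeriv v (eulerDeriv f) = dirDeriv v f + eulerDeriv (dirDeriv v f) :=
    funext (dirDeriv_eulerDeriv (hf.of_le (by norm_num)) v)
  calc dirDeriv v (dirDeriv v (eulerDeriv f)) x
      = dirDeriv v (dirDeriv v f) x + dirDeriv v (eulerDeriv (dirDeriv v f)) x := by
        rw [first_order, dirDeriv, fderiv_add (hv.differentiable two_ne_zero x)
          ((contDiff_eulerDeriv (n := 1) hv).differentiable one_ne_zero x)]
        rfl
    _ = _ := by rw [dirDeriv_eulerDeriv hv]; ring

theorem hasDerivAt_comp_smul (hf : Differentiable ℝ f) (v : E) (s : ℝ) :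
    HasDerivAt (fun t : ℝ ↦ f (t • v)) (dirDeriv v f (s • v)) s := by
  simpa only [dirDeriv, one_smul, Function.comp_def, id_eq] using
    (hf (s • v)).hasFDerivAt.comp_hasDerivAt s ((hasDerivAt_id s).smul_const v)

end DirectionalDerivative

section Laplacian

variable {E : Type*} [NormedAddCommGroup E] [InnerProductSpace ℝ E] [FiniteDimensional ℝ E]
  {f : E → ℝ}

theorem laplacian_eq_sum_dirDeriv {ι : Type*} [Fintype ι] (b : OrthonormalBasis ι ℝ E)
    (hf : ContDiff ℝ 2 f) (x : E) : Δ f x = ∑ i, dirDeriv (b i) (dirDeriv (b i) f) x := by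
  simp [InnerProductSpace.laplacian_eq_iteratedFDeriv_orthonormalBasis f b,
    iteratedFDeriv_two_apply, dirDeriv_dirDeriv hf]

theorem laplacian_eulerDeriv (hf : ContDiff ℝ 3 f) (x : E) :
    Δ (eulerDeriv f) x = 2 * Δ f x + eulerDeriv (Δ f) x := by
  let b := stdOrthonormalBasis ℝ E
  have hf2 : ContDiff ℝ 2 f := hf.of_le (by norm_num)
  have hD : ∀ i, Differentiable ℝ (dirDeriv (b i) (dirDeriv (b i) f)) := fun i ↦
    (contDiff_dirDeriv (n := 1) (contDiff_dirDeriv hf _) _).differentiable one_ne_zero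
  have euler_sum :
      eulerDeriv (Δ f) x = ∑ i, eulerDeriv (dirDeriv (b i) (dirDeriv (b i) f)) x := by
    rw [funext (laplacian_eq_sum_dirDeriv b hf2), eulerDeriv, fderiv_fun_sum fun i _ ↦ hD i x]
    simp [eulerDeriv]
  rw [laplacian_eq_sum_dirDeriv b (contDiff_eulerDeriv hf), laplacian_eq_sum_dirDeriv b hf2,
    euler_sum, Finset.mul_sum, ← Finset.sum_add_distrib]
  exact Finset.sum_congr rfl fun i _ ↦ dirDeriv_dirDeriv_eulerDeriv hf (b i) x

theorem laplacian_eulerDeriv_of_semilinear {F : ℝ → ℝ} {F' : ℝ} (hf : ContDiff ℝ 3 f)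
    (heq : Δ f = F ∘ f) {x : E} (hF : HasDerivAt F F' (f x)) :
    Δ (eulerDeriv f) x = 2 * F (f x) + F' * eulerDeriv f x := by
  have hfx : HasFDerivAt f (fderiv ℝ f x) x :=
    (hf.differentiable three_ne_zero x).hasFDerivAt
  rw [laplacian_eulerDeriv hf, heq, eulerDeriv, (hF.comp_hasFDerivAt x hfx).fderiv]
  rfl

end Laplacian

/-- A function of the norm alone. -/
def IsRadial {E : Type*} [Norm E] (f : E → ℝ) : Prop := ∀ x y : E, ‖x‖ = ‖y‖ → f x = f y

namespace IsRadial

variable {E : Type*} [NormedAddCommGroup E] [InnerProductSpace ℝ E] {f : E → ℝ}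

-- Along a line through `x` orthogonal to `x`, a radial function is even about `x`.
theorem dirDeriv_eq_zero_of_inner_eq_zero (h : IsRadial f) (hf : Differentiable ℝ f) {x v : E}
    (hxv : ⟪x, v⟫ = 0) : dirDeriv v f x = 0 := by
  have line : HasDerivAt (fun s : ℝ ↦ f (x + s • v)) (dirDeriv v f x) 0 :=
    (hf x).hasFDerivAt.hasLineDerivAt v
  have even : (fun s : ℝ ↦ f (x + s • v)) ∘ Neg.neg = fun s ↦ f (x + s • v) := by
    funext s
    refine h _ _ ?_
    rw [← sq_eq_sq₀ (norm_nonneg _) (norm_nonneg _), norm_add_sq_real, norm_add_sq_real]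
    simp [inner_smul_right, hxv, norm_smul]
  have reflected : HasDerivAt (fun s : ℝ ↦ f (x + s • v)) (-dirDeriv v f x) 0 := by
    rw [← even, ← neg_one_smul ℝ (dirDeriv v f x)]
    exact HasDerivAt.scomp (0 : ℝ) (by rwa [neg_zero]) (hasDerivAt_neg (0 : ℝ))
  linarith [reflected.unique line]

theorem fderiv_zero (h : IsRadial f) (hf : Differentiable ℝ f) : fderiv ℝ f 0 = 0 :=
  ContinuousLinearMap.ext fun v ↦ h.dirDeriv_eq_zero_of_inner_eq_zero hf (inner_zero_left v)

theorem inner_mul_dirDeriv_comm (h : IsRadial f) (hf : Differentiable ℝ f) (x a b : E) :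
    ⟪a, x⟫ * dirDeriv b f x = ⟪b, x⟫ * dirDeriv a f x := by
  have tangential : dirDeriv (⟪a, x⟫ • b - ⟪b, x⟫ • a) f x = 0 := by
    refine h.dirDeriv_eq_zero_of_inner_eq_zero hf ?_
    rw [inner_sub_right, inner_smul_right, inner_smul_right, real_inner_comm a x,
      real_inner_comm b x]
    ring
  simpa [dirDeriv, sub_eq_zero] using tangential

theorem mul_dirDeriv_dirDeriv_smul (h : IsRadial f) (hf : ContDiff ℝ 2 f) {a b : E}
    (ha : ‖a‖ = 1) (hb : ‖b‖ = 1) (hab : ⟪a, b⟫ = 0) (r : ℝ) :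
    r * dirDeriv b (dirDeriv b f) (r • a) = dirDeriv a f (r • a) := by
  have hD : ∀ v, Differentiable ℝ (dirDeriv v f) := fun v ↦
    (contDiff_dirDeriv (n := 1) hf v).differentiable one_ne_zero
  have hinner : ∀ v, HasFDerivAt (fun x : E ↦ ⟪v, x⟫) (innerSL ℝ v) (r • a) := fun v ↦
    (innerSL ℝ v).hasFDerivAt
  have hL := (hinner a).mul (hD b (r • a)).hasFDerivAt
  have hR := (hinner b).mul (hD a (r • a)).hasFDerivAt
  have rotation : (fun x : E ↦ ⟪a, x⟫) * dirDeriv b f = (fun x ↦ ⟪b, x⟫) * dirDeriv a f :=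
    funext fun x ↦ h.inner_mul_dirDeriv_comm (hf.differentiable two_ne_zero) x a b
  have differentiated := DFunLike.congr_fun ((rotation ▸ hL).unique hR) b
  simpa [inner_smul_right, ha, hb, hab, real_inner_comm a b, dirDeriv] using differentiated

theorem dirDeriv_smul_eq_of_norm_eq (h : IsRadial f) (hf : Differentiable ℝ f) {u v : E}
    (huv : ‖u‖ = ‖v‖) (s : ℝ) : dirDeriv u f (s • u) = dirDeriv v f (s • v) := by
  have same : (fun t : ℝ ↦ f (t • u)) = fun t ↦ f (t • v) :=
    funext fun t ↦ h _ _ (by rw [norm_smul, norm_smul, huv])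
  exact (hasDerivAt_comp_smul hf u s).unique (same ▸ hasDerivAt_comp_smul hf v s)

theorem isRadial_eulerDeriv (h : IsRadial f) (hf : Differentiable ℝ f) :
    IsRadial (eulerDeriv f) := fun x y hxy ↦ by
  simpa [dirDeriv, eulerDeriv] using h.dirDeriv_smul_eq_of_norm_eq hf hxy 1

theorem dirDeriv_dirDeriv_smul_eq_of_norm_eq (h : IsRadial f) (hf : ContDiff ℝ 2 f) {u v : E}
    (huv : ‖u‖ = ‖v‖) (s : ℝ) :
    dirDeriv u (dirDeriv u f) (s • u) = dirDeriv v (dirDeriv v f) (s • v) := by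
  have hD : ∀ v, Differentiable ℝ (dirDeriv v f) := fun v ↦
    (contDiff_dirDeriv (n := 1) hf v).differentiable one_ne_zero
  have same : (fun t : ℝ ↦ dirDeriv u f (t • u)) = fun t ↦ dirDeriv v f (t • v) :=
    funext (h.dirDeriv_smul_eq_of_norm_eq (hf.differentiable two_ne_zero) huv)
  exact (hasDerivAt_comp_smul (hD u) u s).unique (same ▸ hasDerivAt_comp_smul (hD v) v s)

theorem norm_sq_mul_laplacian_zero [FiniteDimensional ℝ E] (h : IsRadial f)
    (hf : ContDiff ℝ 2 f) (v : E) :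
    ‖v‖ ^ 2 * Δ f 0 = Module.finrank ℝ E * dirDeriv v (dirDeriv v f) 0 := by
  let b := stdOrthonormalBasis ℝ E
  have hess : ∀ i, ‖v‖ ^ 2 * dirDeriv (b i) (dirDeriv (b i) f) 0 = dirDeriv v (dirDeriv v f) 0 := by
    intro i
    have hnorm : ‖v‖ = ‖‖v‖ • b i‖ := by simp [norm_smul]
    have key := h.dirDeriv_dirDeriv_smul_eq_of_norm_eq hf hnorm 0
    simp only [zero_smul, dirDeriv_dirDeriv hf, map_smul, smul_apply, smul_eq_mul] at key ⊢
    rw [key]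
    ring
  rw [laplacian_eq_sum_dirDeriv b hf, Finset.mul_sum, Finset.sum_congr rfl fun i _ ↦ hess i]
  simp

theorem eq_zero_of_fderiv_dirDeriv_zero [FiniteDimensional ℝ E] (h : IsRadial f)
    (hf : ContDiff ℝ 2 f) (hΔ : Δ f 0 ≠ 0) {v : E} (hv : fderiv ℝ (dirDeriv v f) 0 = 0) :
    v = 0 := by
  have key := h.norm_sq_mul_laplacian_zero hf v
  have hvv : dirDeriv v (dirDeriv v f) 0 = 0 := by rw [dirDeriv, hv]; rfl
  simpa [hvv, hΔ] using key

theorem mul_laplacian_smul [FiniteDimensional ℝ E] (h : IsRadial f) (hf : ContDiff ℝ 2 f) {e : E}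
    (he : ‖e‖ = 1) (r : ℝ) :
    r * Δ f (r • e) = r * dirDeriv e (dirDeriv e f) (r • e) +
      (Module.finrank ℝ E - 1 : ℕ) * dirDeriv e f (r • e) := by
  classical
  have he_orthonormal : Orthonormal ℝ ((↑) : ({e} : Set E) → E) :=
    orthonormal_subsingleton_iff.2 fun i ↦ by rw [i.2, he]
  obtain ⟨u, b, heu, hb⟩ := he_orthonormal.exists_orthonormalBasis_extension
  obtain ⟨i, rfl⟩ : ∃ i, b i = e := ⟨⟨e, heu rfl⟩, by rw [hb]⟩
  have tangential : ∀ j ∈ Finset.univ.erase i,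
      r * dirDeriv (b j) (dirDeriv (b j) f) (r • b i) = dirDeriv (b i) f (r • b i) := fun j hj ↦
    h.mul_dirDeriv_dirDeriv_smul hf he (b.norm_eq_one j)
      (b.inner_eq_zero (Finset.ne_of_mem_erase hj).symm) r
  rw [laplacian_eq_sum_dirDeriv b hf, Finset.mul_sum,
    ← Finset.add_sum_erase _ _ (Finset.mem_univ i), Finset.sum_congr rfl tangential,
    Finset.sum_const, Finset.card_erase_of_mem (Finset.mem_univ i), Finset.card_univ,
    ← Module.finrank_eq_card_basis b.toBasis, nsmul_eq_mul]

end IsRadial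

section RadialODE

theorem tendsto_atTop_zero_of_integrableOn_pow_mul_sq {g : ℝ → ℝ} {d : ℕ}
    (hg : Differentiable ℝ g) (hint : IntegrableOn (fun r ↦ r ^ d * g r ^ 2) (Ioi 0))
    (hint' : IntegrableOn (fun r ↦ r ^ d * deriv g r ^ 2) (Ioi 0)) :
    Tendsto g atTop (𝓝 0) := by
  let q' : ℝ → ℝ := fun r ↦ d * r ^ (d - 1) * g r ^ 2 + r ^ d * (2 * g r * deriv g r)
  have hq : ∀ r, HasDerivAt (fun s ↦ s ^ d * g s ^ 2) (q' r) r := fun r ↦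
    ((hasDerivAt_pow d r).mul ((hg r).hasDerivAt.pow 2)).congr_deriv (by simp [q'])
  have one_sub : Ioi (1 : ℝ) ⊆ Ioi 0 := Ioi_subset_Ioi zero_le_one
  have hq'_le : ∀ r ∈ Ioi (1 : ℝ),
      ‖q' r‖ ≤ (d + 1) * (r ^ d * g r ^ 2) + r ^ d * deriv g r ^ 2 := by
    intro r (hr : 1 < r)
    have hpow : r ^ (d - 1) ≤ r ^ d := pow_le_pow_right₀ hr.le (Nat.sub_le d 1)
    have young : |2 * g r * deriv g r| ≤ g r ^ 2 + deriv g r ^ 2 := by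
      rw [abs_mul, abs_mul, abs_two, ← sq_abs (g r), ← sq_abs (deriv g r)]
      exact two_mul_le_add_sq _ _
    calc ‖q' r‖ ≤ d * r ^ (d - 1) * g r ^ 2 + r ^ d * |2 * g r * deriv g r| := by
          refine (norm_add_le _ _).trans (le_of_eq ?_)
          rw [norm_of_nonneg (by positivity), norm_mul, norm_of_nonneg (by positivity),
            Real.norm_eq_abs]
      _ ≤ d * r ^ d * g r ^ 2 + r ^ d * (g r ^ 2 + deriv g r ^ 2) := by gcongr
      _ = _ := by ring
  have hq'_meas : Measurable q' := by
    have := hg.continuous.measurable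
    have := measurable_deriv g
    fun_prop
  have hq'_int : IntegrableOn q' (Ioi 1) :=
    (((hint.mono_set one_sub).const_mul _).add (hint'.mono_set one_sub)).mono'
      hq'_meas.aestronglyMeasurable (ae_restrict_of_forall_mem measurableSet_Ioi hq'_le)
  have hq_lim : Tendsto (fun r ↦ r ^ d * g r ^ 2) atTop (𝓝 0) :=
    tendsto_zero_of_hasDerivAt_of_integrableOn_Ioi (fun r _ ↦ hq r) hq'_int
      (hint.mono_set one_sub)
  have hg_sq : Tendsto (fun r ↦ g r ^ 2) atTop (𝓝 0) := by
    refine squeeze_zero' (.of_forall fun r ↦ sq_nonneg (g r)) ?_ hq_lim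
    filter_upwards [eventually_ge_atTop 1] with r hr
    exact le_mul_of_one_le_left (sq_nonneg _) (one_le_pow₀ hr)
  rw [tendsto_zero_iff_abs_tendsto_zero]
  simpa [Function.comp_def, sqrt_sq_eq_abs] using hg_sq.sqrt

theorem exists_forall_abs_le_of_eventually_abs_le {h : ℝ → ℝ} (hh : Continuous h) {C : ℝ}
    (hC : ∀ᶠ r in atTop, |h r| ≤ C) (a : ℝ) : ∃ M, ∀ r ≥ a, |h r| ≤ M := by
  obtain ⟨R, hR⟩ := eventually_atTop.1 hC
  obtain ⟨K, hK⟩ := (isCompact_Icc (a := a) (b := R)).exists_bound_of_continuousOn hh.continuousOn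
  refine ⟨max K C, fun r hr ↦ ?_⟩
  rcases le_total r R with hrR | hrR
  · exact (hK r ⟨hr, hrR⟩).trans (le_max_left K C)
  · exact (hR r hrR).trans (le_max_right K C)

theorem deriv_nonpos_of_monotoneOn_pow_mul_deriv {g : ℝ → ℝ} {d : ℕ} {R r : ℝ}
    (hg : Differentiable ℝ g) (hpos : ∀ r, 0 < g r) (hlim : Tendsto g atTop (𝓝 0)) (hR : 0 < R)
    (hmono : MonotoneOn (fun r ↦ r ^ d * deriv g r) (Ici R)) (hr : R ≤ r) : deriv g r ≤ 0 := by
  by_contra! hgr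
  have deriv_nonneg : ∀ s ≥ r, 0 ≤ deriv g s := by
    intro s hs
    have hr0 : 0 < r := hR.trans_le hr
    have hs0 : 0 < s := hr0.trans_le hs
    have hle : r ^ d * deriv g r ≤ s ^ d * deriv g s := hmono hr (hr.trans hs) hs
    exact nonneg_of_mul_nonneg_right ((by positivity : 0 ≤ r ^ d * deriv g r).trans hle)
      (pow_pos hs0 d)
  have g_mono : MonotoneOn g (Ici r) :=
    monotoneOn_of_deriv_nonneg (convex_Ici r) hg.continuous.continuousOn hg.differentiableOn
      fun s hs ↦ deriv_nonneg s (interior_subset hs)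
  have limit_ge : g r ≤ 0 := ge_of_tendsto hlim <| by
    filter_upwards [eventually_ge_atTop r] with s hs using g_mono self_mem_Ici hs hs
  exact limit_ge.not_gt (hpos r)

/-- The equation `g'' + (d / r) g' = F (g)` satisfied by the profile of a radial solution of
`Δu = F (u)` in dimension `d + 1`, multiplied by `r` so as to be meaningful at `r = 0`. -/
def SolvesRadialODE (d : ℕ) (F g : ℝ → ℝ) : Prop :=
  ∀ r, r * deriv (deriv g) r + d * deriv g r = r * F (g r)

namespace SolvesRadialODE

variable {d : ℕ} {F g : ℝ → ℝ}

theorem hasDerivAt_pow_mul_deriv (h : SolvesRadialODE d F g) (hd : d ≠ 0) (hg : ContDiff ℝ 2 g)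
    (r : ℝ) : HasDerivAt (fun s ↦ s ^ d * deriv g s) (r ^ d * F (g r)) r := by
  have hg' : HasDerivAt (deriv g) (deriv (deriv g) r) r :=
    (hg.differentiable_deriv_two r).hasDerivAt
  refine ((hasDerivAt_pow d r).mul hg').congr_deriv ?_
  obtain ⟨k, rfl⟩ := Nat.exists_eq_add_one_of_ne_zero hd
  rw [add_tsub_cancel_right]
  linear_combination r ^ k * h r

theorem exists_abs_mul_deriv_le (h : SolvesRadialODE d F g) (hd : d ≠ 0) (hg : ContDiff ℝ 2 g)
    (hpos : ∀ r, 0 < g r) (hlim : Tendsto g atTop (𝓝 0)) (hF : ∀ᶠ s in 𝓝[>] 0, 0 ≤ F s) :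
    ∃ M, ∀ r ≥ 0, |r * deriv g r| ≤ M := by
  have hlim' : Tendsto g atTop (𝓝[>] 0) :=
    tendsto_nhdsWithin_iff.2 ⟨hlim, .of_forall hpos⟩
  obtain ⟨R, hR1, hFR⟩ : ∃ R ≥ 1, ∀ r ≥ R, 0 ≤ F (g r) := by
    obtain ⟨R, hR⟩ := eventually_atTop.1 (hlim'.eventually hF)
    exact ⟨max R 1, le_max_right R 1, fun r hr ↦ hR r ((le_max_left R 1).trans hr)⟩
  have hR0 : 0 < R := zero_lt_one.trans_le hR1
  let p : ℝ → ℝ := fun r ↦ r ^ d * deriv g r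
  have hp : ∀ r, HasDerivAt p (r ^ d * F (g r)) r := h.hasDerivAt_pow_mul_deriv hd hg
  have p_mono : MonotoneOn p (Ici R) := by
    refine monotoneOn_of_deriv_nonneg (convex_Ici R)
      (fun r _ ↦ (hp r).continuousAt.continuousWithinAt)
      (fun r _ ↦ (hp r).differentiableAt.differentiableWithinAt) fun r hr ↦ ?_
    have hRr : R ≤ r := interior_subset hr
    have := hR0.trans_le hRr
    have := hFR r hRr
    rw [(hp r).deriv]
    positivity
  have bound : ∀ r ≥ R, |r * deriv g r| ≤ -p R := by
    intro r hr
    have hr1 : 1 ≤ r := hR1.trans hr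
    have hneg : deriv g r ≤ 0 := deriv_nonpos_of_monotoneOn_pow_mul_deriv
      (hg.differentiable two_ne_zero) hpos hlim hR0 p_mono hr
    calc |r * deriv g r| = r * -deriv g r := by
          rw [abs_of_nonpos (mul_nonpos_of_nonneg_of_nonpos (by linarith) hneg), mul_neg]
      _ ≤ r ^ d * -deriv g r := by
          gcongr
          · linarith
          · exact le_self_pow₀ hr1 hd
      _ = -p r := mul_neg _ _
      _ ≤ -p R := neg_le_neg (p_mono self_mem_Ici hr hr)
  exact exists_forall_abs_le_of_eventually_abs_le
    (continuous_id.mul (hg.continuous_deriv one_le_two)) (eventually_atTop.2 ⟨R, bound⟩) 0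

theorem antitoneOn_energy {Φ : ℝ → ℝ} (h : SolvesRadialODE d F g) (hg : ContDiff ℝ 2 g)
    (hΦ : ∀ s, HasDerivAt Φ (F s) s) :
    AntitoneOn (fun r ↦ deriv g r ^ 2 / 2 - Φ (g r)) (Ici 0) := by
  have hE : ∀ r, HasDerivAt (fun r ↦ deriv g r ^ 2 / 2 - Φ (g r))
      (deriv g r * (deriv (deriv g) r - F (g r))) r := by
    intro r
    have hg₀ := (hg.differentiable two_ne_zero r).hasDerivAt
    have hg₁ := (hg.differentiable_deriv_two r).hasDerivAt
    refine (((hg₁.pow 2).div_const 2).sub ((hΦ (g r)).comp r hg₀)).congr_deriv ?_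
    push_cast
    ring
  refine antitoneOn_of_deriv_nonpos (convex_Ici 0)
    (fun r _ ↦ (hE r).continuousAt.continuousWithinAt)
    (fun r _ ↦ (hE r).differentiableAt.differentiableWithinAt) fun r hr ↦ ?_
  rw [interior_Ici, mem_Ioi] at hr
  rw [(hE r).deriv]
  refine nonpos_of_mul_nonpos_right ?_ hr
  calc r * (deriv g r * (deriv (deriv g) r - F (g r))) = -(d * deriv g r ^ 2) := by
        linear_combination deriv g r * h r
    _ ≤ 0 := neg_nonpos.2 (by positivity)

theorem primitive_apply_zero_le {Φ : ℝ → ℝ} (h : SolvesRadialODE d F g) (hd : d ≠ 0)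
    (hg : ContDiff ℝ 2 g) (hpos : ∀ r, 0 < g r) (hlim : Tendsto g atTop (𝓝 0))
    (hF : ∀ᶠ s in 𝓝[>] 0, 0 ≤ F s) (hΦ : ∀ s, HasDerivAt Φ (F s) s) : Φ (g 0) ≤ Φ 0 := by
  obtain ⟨M, hM⟩ := h.exists_abs_mul_deriv_le hd hg hpos hlim hF
  have hg'0 : deriv g 0 = 0 := by simpa [hd] using h 0
  have hg'_lim : Tendsto (deriv g) atTop (𝓝 0) := by
    refine squeeze_zero_norm' ?_ (tendsto_const_nhds.div_atTop tendsto_id : Tendsto (M / ·) _ _)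
    filter_upwards [eventually_gt_atTop 0] with r hr
    rw [le_div_iff₀' hr]
    simpa [abs_mul, abs_of_pos hr] using hM r hr.le
  have energy_lim : Tendsto (fun r ↦ deriv g r ^ 2 / 2 - Φ (g r)) atTop (𝓝 (-Φ 0)) := by
    simpa using ((hg'_lim.pow 2).div_const 2).sub ((hΦ 0).continuousAt.tendsto.comp hlim)
  have energy_le : -Φ 0 ≤ deriv g 0 ^ 2 / 2 - Φ (g 0) := le_of_tendsto energy_lim <| by
    filter_upwards [eventually_ge_atTop 0] with r hr
    exact h.antitoneOn_energy hg hΦ self_mem_Ici hr hr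
  simpa [hg'0] using energy_le

end SolvesRadialODE

end RadialODE

section Profile

/-- The restriction `r ↦ f (r • e)` of `f` to the line spanned by `e`; for a radial `f` and a unit
vector `e` this is the radial profile of `f`, extended evenly to negative radii. -/
def profile {E : Type*} [NormedAddCommGroup E] [NormedSpace ℝ E] (f : E → ℝ) (e : E) (r : ℝ) : ℝ :=
  f (r • e)

variable {E : Type*} [NormedAddCommGroup E] [InnerProductSpace ℝ E] {f : E → ℝ} {e : E}

theorem contDiff_profile {n : WithTop ℕ∞} (hf : ContDiff ℝ n f) (e : E) :
    ContDiff ℝ n (profile f e) :=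
  hf.comp (contDiff_id.smul contDiff_const)

theorem deriv_profile (hf : Differentiable ℝ f) (e : E) :
    deriv (profile f e) = profile (dirDeriv e f) e :=
  funext fun r ↦ (hasDerivAt_comp_smul hf e r).deriv

theorem exists_norm_eq_one_and_norm_smul_eq (he : ‖e‖ = 1) (x : E) :
    ∃ u : E, ‖u‖ = 1 ∧ ‖x‖ • u = x := by
  rcases eq_or_ne x 0 with rfl | hx
  · exact ⟨e, he, by simp⟩
  · exact ⟨‖x‖⁻¹ • x, norm_smul_inv_norm hx, smul_inv_smul₀ (norm_ne_zero_iff.2 hx) x⟩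

namespace IsRadial

theorem profile_norm (h : IsRadial f) (he : ‖e‖ = 1) (x : E) : profile f e ‖x‖ = f x :=
  h _ _ (by simp [norm_smul, he])

theorem eulerDeriv_eq_norm_mul_deriv_profile (h : IsRadial f) (hf : Differentiable ℝ f)
    (he : ‖e‖ = 1) (x : E) : eulerDeriv f x = ‖x‖ * deriv (profile f e) ‖x‖ := by
  have hx : ‖x‖ = ‖‖x‖ • e‖ := by simp [norm_smul, he]
  simpa [deriv_profile hf, profile, dirDeriv, eulerDeriv] using
    h.dirDeriv_smul_eq_of_norm_eq hf hx 1

theorem abs_deriv_profile_norm_le (h : IsRadial f) (hf : Differentiable ℝ f)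
    (he : ‖e‖ = 1) (x : E) : |deriv (profile f e) ‖x‖| ≤ ‖fderiv ℝ f x‖ := by
  obtain ⟨u, hu, hux⟩ := exists_norm_eq_one_and_norm_smul_eq he x
  calc |deriv (profile f e) ‖x‖| = ‖fderiv ℝ f x u‖ := by
        rw [deriv_profile hf, profile, h.dirDeriv_smul_eq_of_norm_eq hf (he.trans hu.symm), hux]
        rfl
    _ ≤ ‖fderiv ℝ f x‖ := by simpa [hu] using (fderiv ℝ f x).le_opNorm u

variable [FiniteDimensional ℝ E]

theorem solvesRadialODE_profile {F : ℝ → ℝ} (h : IsRadial f) (hf : ContDiff ℝ 2 f)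
    (heq : Δ f = F ∘ f) (he : ‖e‖ = 1) :
    SolvesRadialODE (Module.finrank ℝ E - 1) F (profile f e) := by
  intro r
  have hf' : Differentiable ℝ (dirDeriv e f) :=
    (contDiff_dirDeriv (n := 1) hf e).differentiable one_ne_zero
  rw [deriv_profile (hf.differentiable two_ne_zero), deriv_profile hf']
  exact (h.mul_laplacian_smul hf he r).symm.trans (by rw [heq]; rfl)

variable [MeasurableSpace E] [BorelSpace E] {μ : Measure E} [μ.IsAddHaarMeasure]

theorem tendsto_profile_atTop_zero (h : IsRadial f) (hf : ContDiff ℝ 1 f)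
    (hint : Integrable (fun x ↦ f x ^ 2) μ) (hint' : Integrable (fun x ↦ ‖fderiv ℝ f x‖ ^ 2) μ)
    (he : ‖e‖ = 1) : Tendsto (profile f e) atTop (𝓝 0) := by
  have : Nontrivial E := nontrivial_of_ne e 0 (norm_ne_zero_iff.1 (he ▸ one_ne_zero))
  have hdiff : Differentiable ℝ f := hf.differentiable one_ne_zero
  have hg : ContDiff ℝ 1 (profile f e) := contDiff_profile hf e
  have hg_int : Integrable (fun x ↦ profile f e ‖x‖ ^ 2) μ := by
    simpa only [h.profile_norm he] using hint
  have hg'_int : Integrable (fun x ↦ deriv (profile f e) ‖x‖ ^ 2) μ := by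
    refine hint'.mono' (Continuous.aestronglyMeasurable ?_) (.of_forall fun x ↦ ?_)
    · exact ((hg.continuous_deriv le_rfl).comp continuous_norm).pow 2
    · rw [norm_pow, Real.norm_eq_abs]
      gcongr
      exact h.abs_deriv_profile_norm_le hdiff he x
  exact tendsto_atTop_zero_of_integrableOn_pow_mul_sq (hg.differentiable one_ne_zero)
    ((integrable_fun_norm_addHaar μ (f := fun r ↦ profile f e r ^ 2)).1 hg_int)
    ((integrable_fun_norm_addHaar μ (f := fun r ↦ deriv (profile f e) r ^ 2)).1 hg'_int)

theorem exists_abs_le [Nontrivial E] (h : IsRadial f) (hf : ContDiff ℝ 1 f)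
    (hint : Integrable (fun x ↦ f x ^ 2) μ) (hint' : Integrable (fun x ↦ ‖fderiv ℝ f x‖ ^ 2) μ) :
    ∃ M, ∀ x, |f x| ≤ M := by
  obtain ⟨e, he⟩ := exists_norm_eq E zero_le_one
  have hlim : Tendsto (fun r ↦ |profile f e r|) atTop (𝓝 0) := by
    simpa using (h.tendsto_profile_atTop_zero hf hint hint' he).abs
  obtain ⟨M, hM⟩ := exists_forall_abs_le_of_eventually_abs_le
    (contDiff_profile hf e).continuous (hlim.eventually_le_const zero_lt_one) 0
  exact ⟨M, fun x ↦ h.profile_norm he x ▸ hM ‖x‖ (norm_nonneg x)⟩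

variable {F : ℝ → ℝ}

theorem exists_abs_eulerDeriv_le (hE : 2 ≤ Module.finrank ℝ E) (h : IsRadial f)
    (hf : ContDiff ℝ 2 f) (hpos : ∀ x, 0 < f x) (heq : Δ f = F ∘ f)
    (hF : ∀ᶠ s in 𝓝[>] 0, 0 ≤ F s)
    (hint : Integrable (fun x ↦ f x ^ 2) μ) (hint' : Integrable (fun x ↦ ‖fderiv ℝ f x‖ ^ 2) μ) :
    ∃ M, ∀ x, |eulerDeriv f x| ≤ M := by
  have : Nontrivial E := Module.nontrivial_of_finrank_pos (R := ℝ) (by omega)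
  obtain ⟨e, he⟩ := exists_norm_eq E zero_le_one
  obtain ⟨M, hM⟩ := (h.solvesRadialODE_profile hf heq he).exists_abs_mul_deriv_le (by omega)
    (contDiff_profile hf e) (fun r ↦ hpos _)
    (h.tendsto_profile_atTop_zero (hf.of_le one_le_two) hint hint' he) hF
  refine ⟨M, fun x ↦ ?_⟩
  rw [h.eulerDeriv_eq_norm_mul_deriv_profile (hf.differentiable two_ne_zero) he]
  exact hM ‖x‖ (norm_nonneg x)

theorem primitive_apply_zero_le {Φ : ℝ → ℝ} (hE : 2 ≤ Module.finrank ℝ E) (h : IsRadial f)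
    (hf : ContDiff ℝ 2 f) (hpos : ∀ x, 0 < f x) (heq : Δ f = F ∘ f)
    (hF : ∀ᶠ s in 𝓝[>] 0, 0 ≤ F s) (hΦ : ∀ s, HasDerivAt Φ (F s) s)
    (hint : Integrable (fun x ↦ f x ^ 2) μ) (hint' : Integrable (fun x ↦ ‖fderiv ℝ f x‖ ^ 2) μ) :
    Φ (f 0) ≤ Φ 0 := by
  have : Nontrivial E := Module.nontrivial_of_finrank_pos (R := ℝ) (by omega)
  obtain ⟨e, he⟩ := exists_norm_eq E zero_le_one
  have key := (h.solvesRadialODE_profile hf heq he).primitive_apply_zero_le (by omega)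
    (contDiff_profile hf e) (fun r ↦ hpos _)
    (h.tendsto_profile_atTop_zero (hf.of_le one_le_two) hint hint' he) hF hΦ
  simpa [profile] using key

end IsRadial

end Profile

section Gradient

variable {E : Type*} [NormedAddCommGroup E] [InnerProductSpace ℝ E] [CompleteSpace E]

theorem norm_gradient_eq_norm_fderiv (f : E → ℝ) (x : E) : ‖gradient f x‖ = ‖fderiv ℝ f x‖ :=
  LinearIsometryEquiv.norm_map _ _

theorem gradient_eq_zero_iff_fderiv_eq_zero (f : E → ℝ) (x : E) :
    gradient f x = 0 ↔ fderiv ℝ f x = 0 := by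
  rw [← norm_eq_zero, norm_gradient_eq_norm_fderiv, norm_eq_zero]

end Gradient

section Plane

variable {f g w : R2 → ℝ}

theorem lap_eq_laplacian (hf : ContDiff ℝ 2 f) (x : R2) : lap f x = Δ f x := by
  rw [laplacian_eq_sum_dirDeriv (EuclideanSpace.basisFun (Fin 2) ℝ) hf]
  simp only [EuclideanSpace.basisFun_apply]
  rfl

theorem xgrad_eq_eulerDeriv (f : R2 → ℝ) : xgrad f = eulerDeriv f :=
  funext fun _ ↦ inner_gradient_right

theorem Lop_sub (hf : ContDiff ℝ 2 f) (hg : ContDiff ℝ 2 g) (x : R2) :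
    Lop w (f - g) x = Lop w f x - Lop w g x := by
  have hfg : ContDiff ℝ 2 (f - g) := hf.sub hg
  rw [Lop, Lop, Lop, lap_eq_laplacian hf, lap_eq_laplacian hg, lap_eq_laplacian hfg,
    hf.contDiffAt.laplacian_sub hg.contDiffAt, Pi.sub_apply]
  ring

theorem bddFun_sub (hf : BddFun f) (hg : BddFun g) : BddFun (f - g) := by
  obtain ⟨A, hA⟩ := hf
  obtain ⟨B, hB⟩ := hg
  exact ⟨A + B, fun x ↦ (abs_sub _ _).trans (add_le_add (hA x) (hB x))⟩

/-- The function `ψ₂ = -(1/2)(w + x·∇w)`, a multiple of the derivative at `t = 1` of the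
scaling `t ↦ t w (t ·)`. -/
def psi2 (w : R2 → ℝ) (x : R2) : ℝ := -(1 / 2) * (w x + xgrad w x)

theorem psi2_eq_smul (w : R2 → ℝ) : psi2 w = (-(1 / 2) : ℝ) • (w + eulerDeriv w) := by
  rw [← xgrad_eq_eulerDeriv]
  rfl

theorem contDiff_psi2 {n : WithTop ℕ∞} (hw : ContDiff ℝ (n + 1) w) : ContDiff ℝ n (psi2 w) := by
  rw [psi2_eq_smul]
  exact ((hw.of_le le_self_add).add (contDiff_eulerDeriv hw)).const_smul (-(1 / 2) : ℝ)

end Plane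

theorem eventually_sub_cube_nonneg : ∀ᶠ s : ℝ in 𝓝[>] 0, 0 ≤ s - s ^ 3 := by
  filter_upwards [Ioo_mem_nhdsGT one_pos] with s hs
  exact sub_nonneg.2 (pow_le_of_le_one hs.1.le hs.2.le three_ne_zero)

namespace IsGroundState

variable {w : R2 → ℝ}

theorem isRadial (hw : IsGroundState w) : IsRadial w := hw.radial

theorem laplacian_eq (hw : IsGroundState w) : Δ w = (fun s ↦ s - s ^ 3) ∘ w := by
  funext x
  rw [← lap_eq_laplacian hw.smooth, Function.comp_apply]
  linear_combination hw.eqn x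

theorem integrable_norm_fderiv_sq (hw : IsGroundState w) :
    Integrable fun x ↦ ‖fderiv ℝ w x‖ ^ 2 := by
  simpa only [norm_gradient_eq_norm_fderiv] using hw.gradSqInt

theorem laplacian_zero_ne_zero (hw : IsGroundState w) : Δ w 0 ≠ 0 := by
  have hΦ : ∀ s : ℝ, HasDerivAt (fun s ↦ s ^ 2 / 2 - s ^ 4 / 4) (s - s ^ 3) s := fun s ↦
    (((hasDerivAt_pow 2 s).div_const 2).sub ((hasDerivAt_pow 4 s).div_const 4)).congr_deriv
      (by push_cast; ring)
  have energy : w 0 ^ 2 / 2 - w 0 ^ 4 / 4 ≤ 0 := by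
    simpa using hw.isRadial.primitive_apply_zero_le (by simp) hw.smooth hw.pos hw.laplacian_eq
      eventually_sub_cube_nonneg hΦ hw.sqInt hw.integrable_norm_fderiv_sq
  have hw0 : 0 < w 0 := hw.pos 0
  have two_le : 2 ≤ w 0 ^ 2 := by
    refine le_of_mul_le_mul_left ?_ (pow_pos hw0 2)
    linarith
  have factored : Δ w 0 = w 0 * (1 - w 0 ^ 2) := by
    rw [hw.laplacian_eq, Function.comp_apply]
    ring
  exact factored ▸ mul_ne_zero hw0.ne' (by linarith)

theorem Lop_psi2 (hw : IsGroundState w) (hw3 : ContDiff ℝ 3 w) (x : R2) :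
    Lop w (psi2 w) x = w x := by
  have hE : ContDiff ℝ 2 (eulerDeriv w) := contDiff_eulerDeriv hw3
  have hwE : ContDiff ℝ 2 (w + eulerDeriv w) := hw.smooth.add hE
  have hF : HasDerivAt (fun s : ℝ ↦ s - s ^ 3) (1 - 3 * w x ^ 2) (w x) := by
    simpa using! (hasDerivAt_id (w x)).sub (hasDerivAt_pow 3 (w x))
  have lap_euler := laplacian_eulerDeriv_of_semilinear hw3 hw.laplacian_eq hF
  have lap_psi2 : lap (psi2 w) x = -(1 / 2) * (Δ w x + Δ (eulerDeriv w) x) := by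
    rw [lap_eq_laplacian (contDiff_psi2 hw3), psi2_eq_smul,
      InnerProductSpace.laplacian_smul _ hwE.contDiffAt,
      hw.smooth.contDiffAt.laplacian_add hE.contDiffAt, smul_eq_mul]
  rw [Lop, lap_psi2, lap_euler, hw.laplacian_eq, psi2, xgrad_eq_eulerDeriv, Function.comp_apply]
  ring

theorem isRadial_psi2 (hw : IsGroundState w) : IsRadial (psi2 w) := by
  intro x y hxy
  simp only [psi2, xgrad_eq_eulerDeriv, hw.radial x y hxy,
    hw.isRadial.isRadial_eulerDeriv (hw.smooth.differentiable two_ne_zero) x y hxy]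

theorem gradient_psi2_zero (hw : IsGroundState w) (hw3 : ContDiff ℝ 3 w) :
    gradient (psi2 w) 0 = 0 :=
  (gradient_eq_zero_iff_fderiv_eq_zero _ _).2 <|
    hw.isRadial_psi2.fderiv_zero ((contDiff_psi2 hw3).differentiable two_ne_zero)

theorem bddFun_psi2 (hw : IsGroundState w) : BddFun (psi2 w) := by
  obtain ⟨A, hA⟩ := hw.isRadial.exists_abs_le (hw.smooth.of_le one_le_two) hw.sqInt
    hw.integrable_norm_fderiv_sq
  obtain ⟨B, hB⟩ := hw.isRadial.exists_abs_eulerDeriv_le (by simp) hw.smooth hw.pos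
    hw.laplacian_eq eventually_sub_cube_nonneg hw.sqInt hw.integrable_norm_fderiv_sq
  refine ⟨1 / 2 * (A + B), fun x ↦ ?_⟩
  rw [psi2, xgrad_eq_eulerDeriv, abs_mul, abs_neg, abs_of_pos one_half_pos]
  gcongr
  exact (abs_add_le _ _).trans (add_le_add (hA x) (hB x))

theorem eq_psi2_of_sub_eq_dirDeriv (hw : IsGroundState w) (hw3 : ContDiff ℝ 3 w) {ψ : R2 → ℝ}
    (hψ : ContDiff ℝ 2 ψ) (hgrad : gradient ψ 0 = 0) {v : R2} (hv : ψ - psi2 w = dirDeriv v w) :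
    ψ = psi2 w := by
  have fderiv_zero : fderiv ℝ (dirDeriv v w) 0 = 0 := by
    rw [← hv, fderiv_sub (hψ.differentiable two_ne_zero 0)
      ((contDiff_psi2 hw3).differentiable two_ne_zero 0),
      (gradient_eq_zero_iff_fderiv_eq_zero ψ 0).1 hgrad,
      (gradient_eq_zero_iff_fderiv_eq_zero _ 0).1 (hw.gradient_psi2_zero hw3), sub_zero]
  have v_zero : v = 0 :=
    hw.isRadial.eq_zero_of_fderiv_dirDeriv_zero hw.smooth hw.laplacian_zero_ne_zero fderiv_zero
  refine sub_eq_zero.1 (hv.trans ?_)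
  funext x
  simp [v_zero, dirDeriv]

end IsGroundState

/-- `ψ₂ = -(1/2)(w + x·∇w)` satisfies `-Δψ₂ + (1-3w²)ψ₂ = w`, `∇ψ₂(0) = 0`,
and is the unique such solution in `C²(ℝ²) ∩ L^∞(ℝ²)`. -/
theorem psi2_characterization
    (w : R2 → ℝ) (hw : IsGroundState w) (hw' : ContDiff ℝ (⊤ : ℕ∞) w)
    -- kernel of the linearized operator on bounded functions: `span{∂w/∂x₁, ∂w/∂x₂}`
    (hker : ∀ ξ : R2 → ℝ, ContDiff ℝ 2 ξ → BddFun ξ → (∀ x, Lop w ξ x = 0) →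
      ∃ b1 b2 : ℝ, ξ = fun x =>
        b1 * fderiv ℝ w x (EuclideanSpace.single 0 1) +
          b2 * fderiv ℝ w x (EuclideanSpace.single 1 1)) :
    (∀ x, Lop w (fun y => -(1 / 2) * (w y + xgrad w y)) x = w x) ∧
    gradient (fun y => -(1 / 2) * (w y + xgrad w y)) 0 = 0 ∧
    ContDiff ℝ 2 (fun y => -(1 / 2) * (w y + xgrad w y)) ∧
    BddFun (fun y => -(1 / 2) * (w y + xgrad w y)) ∧
    (∀ ψ : R2 → ℝ, ContDiff ℝ 2 ψ → BddFun ψ → gradient ψ 0 = 0 →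
      (∀ x, Lop w ψ x = w x) → ψ = fun y => -(1 / 2) * (w y + xgrad w y)) := by
  have hw3 : ContDiff ℝ 3 w := mod_cast contDiff_infty.1 hw' 3
  refine ⟨hw.Lop_psi2 hw3, hw.gradient_psi2_zero hw3, contDiff_psi2 hw3, hw.bddFun_psi2,
    fun ψ hψ hψ_bdd hψ_grad hψ_eq ↦ ?_⟩
  have hdiff_eq : ∀ x, Lop w (ψ - psi2 w) x = 0 := fun x ↦ by
    rw [Lop_sub hψ (contDiff_psi2 hw3), hψ_eq, hw.Lop_psi2 hw3, sub_self]
  obtain ⟨b1, b2, hb⟩ :=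
    hker (ψ - psi2 w) (hψ.sub (contDiff_psi2 hw3)) (bddFun_sub hψ_bdd hw.bddFun_psi2) hdiff_eq
  refine hw.eq_psi2_of_sub_eq_dirDeriv hw3 hψ hψ_grad
    (v := b1 • EuclideanSpace.single 0 1 + b2 • EuclideanSpace.single 1 1) (hb.trans ?_)
  funext x
  simp [dirDeriv]
end
end
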